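/- arXiv:2507.01529 — 4 statements merged into one kernel-verified Lean document; each statement's English description precedes it below -/
import Mathlib

section
/- For all integers n ≥ 0, the number of (2,9)-biregular overpartitions of 6n+3 satisfies B̄_{2,9}(6n+3) ≡ 0 (mod 4). -/
/-- `biregOverpartitions l1 l2 n` is the number of `(l1, l2)`-biregular overpartitions of `n`:
overpartitions of `n` (partitions in which the first occurrence of each part size may be
overlined) none of whose parts is divisible by `l1` or by `l2`.  Each partition of `n` with
admissible parts contributes `2 ^ (number of distinct part sizes)` overpartitions,
corresponding to the choice of which part sizes have their first occurrence overlined. -/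
def biregOverpartitions (l1 l2 n : ℕ) : ℕ :=
  ∑ p : Nat.Partition n,
    if ∀ x ∈ p.parts, ¬ l1 ∣ x ∧ ¬ l2 ∣ x then 2 ^ p.parts.toFinset.card else 0

/-!
Modulo `4` an overpartition count only sees the partitions with a single part size, each of weight
`2`, and for `n ≠ 0` these correspond to the divisors `d` of `n` that are admissible as parts. If
`p` is a prime not dividing `l` and `p ^ k ∣ n`, then multiplication by `p ^ i`, for `i ≤ k`, maps
the divisors of `n` divisible neither by `l` nor by `p` bijectively onto those not divisible by `l`
with `p`-adic valuation `i`. Hence the number of divisors divisible neither by `l` nor by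
`p ^ (k + 1)` is a multiple of `k + 1`, and it is even when `k` is odd.
-/

open Finset

/-- The number of overpartitions of `n` all of whose parts satisfy `P`. As in
`biregOverpartitions`, a partition is weighted by the number of ways of overlining it. -/
def restrictedOverpartitions (n : ℕ) (P : ℕ → Prop) [DecidablePred P] : ℕ :=
  ∑ π ∈ Nat.Partition.restricted n P, 2 ^ #π.parts.toFinset

lemma biregOverpartitions_eq_restrictedOverpartitions (l₁ l₂ n : ℕ) :
    biregOverpartitions l₁ l₂ n =
      restrictedOverpartitions n fun x ↦ ¬ l₁ ∣ x ∧ ¬ l₂ ∣ x :=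
  (sum_filter _ _).symm

section ConstantPartition

variable {n d : ℕ}

/-- The partition of `n` into `n / d` parts equal to `d`. The hypothesis `d ∈ n.divisors` includes
`n ≠ 0`, so that `d` is positive and really occurs as a part. -/
def constantPartition (hd : d ∈ n.divisors) : n.Partition where
  parts := Multiset.replicate (n / d) d
  parts_pos hi := Multiset.eq_of_mem_replicate hi ▸ Nat.pos_of_mem_divisors hd
  parts_sum := by
    rw [Multiset.sum_replicate, smul_eq_mul, Nat.div_mul_cancel (Nat.dvd_of_mem_divisors hd)]

lemma toFinset_parts_constantPartition (hd : d ∈ n.divisors) :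
    (constantPartition hd).parts.toFinset = {d} := by
  have hpos : n / d ≠ 0 := (Nat.div_pos (Nat.divisor_le hd) (Nat.pos_of_mem_divisors hd)).ne'
  rw [constantPartition, Multiset.toFinset_replicate, if_neg hpos]

lemma card_parts_mul_eq_of_toFinset_parts_eq_singleton {π : n.Partition}
    (hπ : π.parts.toFinset = {d}) : π.parts.card * d = n := by
  have hparts := ((Multiset.toFinset_eq_singleton_iff _ _).mp hπ).2
  calc π.parts.card * d = (π.parts.card • ({d} : Multiset ℕ)).sum := by
        rw [Multiset.sum_nsmul, Multiset.sum_singleton, smul_eq_mul]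
    _ = n := by rw [← hparts, π.parts_sum]

lemma mem_divisors_of_toFinset_parts_eq_singleton (hn : n ≠ 0) {π : n.Partition}
    (hπ : π.parts.toFinset = {d}) : d ∈ n.divisors :=
  Nat.mem_divisors.mpr
    ⟨Dvd.intro_left _ (card_parts_mul_eq_of_toFinset_parts_eq_singleton hπ), hn⟩

lemma eq_constantPartition_of_toFinset_parts_eq_singleton (hd : d ∈ n.divisors) {π : n.Partition}
    (hπ : π.parts.toFinset = {d}) : π = constantPartition hd := by
  have hcard : π.parts.card = n / d :=
    (Nat.div_eq_of_eq_mul_left (Nat.pos_of_mem_divisors hd)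
      (card_parts_mul_eq_of_toFinset_parts_eq_singleton hπ).symm).symm
  ext1
  exact Multiset.eq_replicate.mpr
    ⟨hcard, fun i hi ↦ mem_singleton.mp (hπ ▸ Multiset.mem_toFinset.mpr hi)⟩

lemma card_restricted_filter_card_toFinset_parts_eq_one (hn : n ≠ 0) (P : ℕ → Prop)
    [DecidablePred P] :
    #{π ∈ Nat.Partition.restricted n P | #π.parts.toFinset = 1} = #{d ∈ n.divisors | P d} := by
  symm
  refine card_bij (fun d hd ↦ constantPartition (mem_filter.mp hd).1) ?maps ?inj ?surj
  case maps =>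
    intro d hd
    obtain ⟨hdn, hP⟩ := mem_filter.mp hd
    refine mem_filter.mpr ⟨mem_filter.mpr ⟨mem_univ _, fun i hi ↦ ?_⟩, ?_⟩
    · rwa [Multiset.eq_of_mem_replicate hi]
    · rw [toFinset_parts_constantPartition, card_singleton]
  case inj =>
    intro d hd e he hde
    simpa only [toFinset_parts_constantPartition, singleton_inj] using
      congrArg (fun π ↦ π.parts.toFinset) hde
  case surj =>
    intro π hπ
    obtain ⟨hP, hcard⟩ := mem_filter.mp hπ
    obtain ⟨d, hd⟩ := card_eq_one.mp hcard
    have hdn := mem_divisors_of_toFinset_parts_eq_singleton hn hd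
    have hdπ : d ∈ π.parts := Multiset.mem_toFinset.mp (hd ▸ mem_singleton_self d)
    exact ⟨d, mem_filter.mpr ⟨hdn, (mem_filter.mp hP).2 d hdπ⟩,
      (eq_constantPartition_of_toFinset_parts_eq_singleton hdn hd).symm⟩

end ConstantPartition

lemma two_pow_modEq_four {m : ℕ} (hm : m ≠ 0) : 2 ^ m ≡ (if m = 1 then 2 else 0) [MOD 4] := by
  split_ifs with h
  · rw [h, pow_one]
  · exact Nat.modEq_zero_iff_dvd.mpr (pow_dvd_pow 2 (by lia : 2 ≤ m))

lemma card_toFinset_parts_ne_zero {n : ℕ} (hn : n ≠ 0) (π : n.Partition) :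
    #π.parts.toFinset ≠ 0 := by
  rw [Ne, card_eq_zero, Multiset.toFinset_eq_empty]
  intro h
  exact hn (by rw [← π.parts_sum, h, Multiset.sum_zero])

lemma restrictedOverpartitions_modEq_four {n : ℕ} (hn : n ≠ 0) (P : ℕ → Prop) [DecidablePred P] :
    restrictedOverpartitions n P ≡ 2 * #{d ∈ n.divisors | P d} [MOD 4] := by
  rw [← card_restricted_filter_card_toFinset_parts_eq_one hn, mul_comm, ← smul_eq_mul, ← sum_const,
    sum_filter]
  exact Nat.ModEq.sum fun π _ ↦ two_pow_modEq_four (card_toFinset_parts_ne_zero hn π)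

section Divisors

variable {l p k n : ℕ}

lemma card_divisors_filter_pow_dvd_not_pow_succ_dvd (hp : p.Prime) (hl : l.Coprime p)
    (hpn : p ^ k ∣ n) :
    #{d ∈ n.divisors | ¬ l ∣ d ∧ p ^ k ∣ d ∧ ¬ p ^ (k + 1) ∣ d} =
      #{d ∈ n.divisors | ¬ l ∣ d ∧ ¬ p ∣ d} := by
  have hpk : p ^ k ≠ 0 := pow_ne_zero k hp.ne_zero
  have hl_iff (e : ℕ) : l ∣ p ^ k * e ↔ l ∣ e := (hl.pow_right k).dvd_mul_left
  have hp_iff (e : ℕ) : p ^ (k + 1) ∣ p ^ k * e ↔ p ∣ e := by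
    rw [pow_succ, mul_dvd_mul_iff_left hpk]
  symm
  refine card_nbij (p ^ k * ·) ?maps (mul_right_injective₀ hpk).injOn ?surj
  case maps =>
    intro e he
    simp only [mem_coe, mem_filter, Nat.mem_divisors, hl_iff, hp_iff] at he ⊢
    obtain ⟨⟨hen, hn⟩, hle, hpe⟩ := he
    have hcop : (p ^ k).Coprime e := ((hp.coprime_iff_not_dvd).mpr hpe).pow_left k
    exact ⟨⟨hcop.mul_dvd_of_dvd_of_dvd hpn hen, hn⟩, hle, dvd_mul_right _ _, hpe⟩
  case surj =>
    intro d hd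
    simp only [mem_coe, mem_filter, Nat.mem_divisors] at hd
    obtain ⟨⟨hdn, hn⟩, hld, ⟨e, rfl⟩, hpd⟩ := hd
    rw [hl_iff] at hld
    rw [hp_iff] at hpd
    exact ⟨e, by simp [dvd_of_mul_left_dvd hdn, hn, hld, hpd], rfl⟩

lemma card_divisors_filter_not_pow_succ_dvd (hp : p.Prime) (hl : l.Coprime p) (hpn : p ^ k ∣ n) :
    #{d ∈ n.divisors | ¬ l ∣ d ∧ ¬ p ^ (k + 1) ∣ d} =
      (k + 1) * #{d ∈ n.divisors | ¬ l ∣ d ∧ ¬ p ∣ d} := by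
  induction k with
  | zero => rw [zero_add, pow_one, one_mul]
  | succ k ih =>
    have hdvd : {d ∈ n.divisors | (¬ l ∣ d ∧ ¬ p ^ (k + 2) ∣ d) ∧ p ^ (k + 1) ∣ d} =
        {d ∈ n.divisors | ¬ l ∣ d ∧ p ^ (k + 1) ∣ d ∧ ¬ p ^ (k + 2) ∣ d} :=
      filter_congr fun d _ ↦ by tauto
    have hndvd : {d ∈ n.divisors | (¬ l ∣ d ∧ ¬ p ^ (k + 2) ∣ d) ∧ ¬ p ^ (k + 1) ∣ d} =
        {d ∈ n.divisors | ¬ l ∣ d ∧ ¬ p ^ (k + 1) ∣ d} :=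
      filter_congr fun d _ ↦ by
        have : p ^ (k + 2) ∣ d → p ^ (k + 1) ∣ d := (pow_dvd_pow p (Nat.le_succ _)).trans
        tauto
    rw [← card_filter_add_card_filter_not (p ^ (k + 1) ∣ ·), filter_filter, filter_filter, hdvd,
      hndvd, card_divisors_filter_pow_dvd_not_pow_succ_dvd hp hl hpn,
      ih ((pow_dvd_pow p k.le_succ).trans hpn)]
    ring

end Divisors

theorem B29_mod4_6n3_general {l p k n : ℕ} (hp : p.Prime) (hl : l.Coprime p) (hk : Odd k)
    (hn : n ≠ 0) (hpn : p ^ k ∣ n) : 4 ∣ biregOverpartitions l (p ^ (k + 1)) n := by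
  rw [biregOverpartitions_eq_restrictedOverpartitions,
    (restrictedOverpartitions_modEq_four hn _).dvd_iff dvd_rfl,
    card_divisors_filter_not_pow_succ_dvd hp hl hpn]
  exact mul_dvd_mul_left 2 (dvd_mul_of_dvd_left hk.add_one.two_dvd _)

theorem B29_mod4_6n3 (n : ℕ) : 4 ∣ biregOverpartitions 2 9 (6 * n + 3) :=
  B29_mod4_6n3_general (k := 1) Nat.prime_three (by decide) odd_one (by lia) (by lia)
end

section
/- For all integers n ≥ 0, the number of (2,9)-biregular overpartitions of 6n+5 satisfies B̄_{2,9}(6n+5) ≡ 0 (mod 8). -/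
/-!
Write `θ(q) = ∑ (-1) ^ j q ^ (j ^ 2)`, the sum being over all integers `j`. By Gauss, `1 / θ` is the
generating function of overpartitions; this is the limit of a finite identity whose error term is
divisible by `q ^ (n + 1)`. With `H(q) = θ(q) / θ(q ^ 9)`, sieving out the multiples of `l` and of
`9` then says that the generating function `F` of `(l, 9)`-biregular overpartitions satisfies
`F(q) H(q) = H(q ^ l)`.

Squares are `0` modulo `9` or `1` modulo `3`, so `H(q) = 1 + 2 u(q)` with `u(q) = q W(q ^ 3)`, and
modulo `8`
`F(q) = H(q ^ l) / H(q) ≡ 1 - 2 u(q) + 2 u(q ^ l) + 4 u(q) ^ 2 - 4 u(q) u(q ^ l)`.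
If `l ≡ 2` modulo `6`, then in the exponents `6 n + 5` only `4 u(q) ^ 2` can contribute, and its
contribution is `4` times an odd-indexed coefficient of the square `W ^ 2`, which is even.
-/

open PowerSeries Finset Filter Topology
open scoped PowerSeries.WithPiTopology

section PowerSeriesLemmas

variable {R : Type*} [CommRing R]

theorem continuous_expand [TopologicalSpace R] {k : ℕ} (hk : k ≠ 0) :
    Continuous (expand k hk : R⟦X⟧ → R⟦X⟧) := by
  rw [continuous_iff_continuousAt]
  intro f
  rw [ContinuousAt, WithPiTopology.tendsto_iff_coeff_tendsto]
  intro d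
  by_cases hd : k ∣ d
  · obtain ⟨m, rfl⟩ := hd
    simpa only [coeff_expand_mul] using (WithPiTopology.continuous_coeff R m).tendsto f
  · simp only [coeff_expand_of_not_dvd _ _ _ hd, tendsto_const_nhds]

theorem tendsto_zero_of_X_pow_dvd [TopologicalSpace R] {f : ℕ → R⟦X⟧}
    (h : ∀ n, X ^ (n + 1) ∣ f n) : Tendsto f atTop (𝓝 0) := by
  rw [WithPiTopology.tendsto_iff_coeff_tendsto]
  intro d
  refine tendsto_const_nhds.congr' ?_
  filter_upwards [eventually_ge_atTop d] with n hn
  rw [map_zero, X_pow_dvd_iff.mp (h n) d (Nat.lt_succ_of_le hn)]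

theorem two_dvd_coeff_sq (f : R⟦X⟧) {n : ℕ} (hn : Odd n) : 2 ∣ (f ^ 2).coeff n := by
  obtain ⟨k, rfl⟩ := hn
  have hderiv : d⁄dX R (f ^ 2) = C 2 * (f * d⁄dX R f) := by
    rw [map_ofNat C 2]
    simp
  have hcoeff := coeff_derivative (f ^ 2) (2 * k)
  rw [hderiv, coeff_C_mul] at hcoeff
  push_cast at hcoeff
  refine ⟨(f * d⁄dX R f).coeff (2 * k) - k * (f ^ 2).coeff (2 * k + 1), ?_⟩
  linear_combination -hcoeff

theorem coeff_X_mul_expand_three_of_mod_ne_one (f : R⟦X⟧) {n : ℕ} (hn : n % 3 ≠ 1) :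
    (X * expand 3 three_ne_zero f).coeff n = 0 := by
  cases n with
  | zero => exact coeff_zero_X_mul _
  | succ n => rw [coeff_succ_X_mul, coeff_expand_of_not_dvd _ _ _ (by omega)]

theorem two_dvd_coeff_sq_X_mul_expand_three (f : R⟦X⟧) (n : ℕ) :
    2 ∣ ((X * expand 3 three_ne_zero f) ^ 2).coeff (6 * n + 5) := by
  rw [mul_pow, ← map_pow, show 6 * n + 5 = 3 * (2 * n + 1) + 2 by ring, coeff_X_pow_mul,
    coeff_expand_mul]
  exact two_dvd_coeff_sq f ⟨n, rfl⟩

theorem coeff_mul_expand_X_mul_expand_three (f : R⟦X⟧) {l n : ℕ} (hl : l ≠ 0)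
    (hmod : l % 3 = 2) (hn : ¬ 3 ∣ n) :
    (X * expand 3 three_ne_zero f * expand l hl (X * expand 3 three_ne_zero f)).coeff n = 0 := by
  obtain ⟨k, rfl⟩ : ∃ k, l = 3 * k + 2 := ⟨l / 3, by omega⟩
  have hcomm : expand (3 * k + 2) hl (expand 3 three_ne_zero f) =
      expand 3 three_ne_zero (expand (3 * k + 2) hl f) := by
    rw [← expand_mul, ← expand_mul]
    congr 2
    ring
  have hprod : X * expand 3 three_ne_zero f * expand (3 * k + 2) hl (X * expand 3 three_ne_zero f) =
      expand 3 three_ne_zero (X ^ (k + 1) * f * expand (3 * k + 2) hl f) := by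
    simp only [map_mul, map_pow, expand_X, hcomm]
    ring
  rw [hprod, coeff_expand_of_not_dvd _ _ _ hn]

end PowerSeriesLemmas

section FiniteGaussIdentity

variable {R : Type*} [CommRing R]

/-- The partial sum `∑_{|j| ≤ n} (-1) ^ j q ^ (j ^ 2)` of the theta series, with `j` and `-j`
collected. -/
def thetaPartialSum (q : R) (n : ℕ) : R :=
  1 + 2 * ∑ j ∈ range n, (-1) ^ (j + 1) * q ^ (j + 1) ^ 2

/-- The error term in the finite form of Gauss's identity, see
`thetaPartialSum_mul_prod_one_add`. -/
def gaussRemainder (q : R) (n : ℕ) : R :=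
  ∑ k ∈ range n, (-1) ^ (k + 1) * q ^ ((k + 1) * (n + 1)) *
    ((∏ i ∈ range k, (1 + q ^ (i + 1))) * ∏ i ∈ Ico (k + 1) n, (1 - q ^ (i + 1)))

theorem gaussRemainder_succ (q : R) (n : ℕ) :
    gaussRemainder q (n + 1) = (1 + q ^ (n + 1)) * gaussRemainder q n +
      q ^ (n + 1) * ∏ i ∈ range n, (1 - q ^ (i + 1)) +
      (-1) ^ (n + 1) * q ^ (n + 1) ^ 2 * ∏ i ∈ range (n + 1), (1 + q ^ (i + 1)) := by
  let g (k : ℕ) : R := (-1) ^ k * q ^ ((k + 1) * (n + 1)) *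
    ((∏ i ∈ range k, (1 + q ^ (i + 1))) * ∏ i ∈ Ico k n, (1 - q ^ (i + 1)))
  have telescope : ∑ k ∈ range n, (-1) ^ (k + 1) * q ^ ((k + 1) * (n + 2)) *
        ((∏ i ∈ range k, (1 + q ^ (i + 1))) * ∏ i ∈ Ico (k + 1) (n + 1), (1 - q ^ (i + 1))) -
      (1 + q ^ (n + 1)) * gaussRemainder q n = g 0 - g n := by
    rw [gaussRemainder, mul_sum, ← sum_sub_distrib, ← sum_range_sub']
    refine sum_congr rfl fun k hk ↦ ?_
    have hk : k < n := mem_range.mp hk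
    simp only [g]
    rw [prod_Ico_succ_top (by omega), prod_range_succ, prod_eq_prod_Ico_succ_bot hk]
    ring
  have hg0 : g 0 = q ^ (n + 1) * ∏ i ∈ range n, (1 - q ^ (i + 1)) := by simp [g]
  have hgn : g n = (-1) ^ n * q ^ (n + 1) ^ 2 * ∏ i ∈ range n, (1 + q ^ (i + 1)) := by
    simp [g, sq]
  rw [hg0, hgn] at telescope
  rw [gaussRemainder, sum_range_succ, Ico_self, prod_empty, prod_range_succ]
  linear_combination telescope

theorem thetaPartialSum_mul_prod_one_add (q : R) (n : ℕ) :
    thetaPartialSum q n * ∏ i ∈ range n, (1 + q ^ (i + 1)) =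
      ∏ i ∈ range n, (1 - q ^ (i + 1)) + 2 * gaussRemainder q n := by
  induction n with
  | zero => simp [thetaPartialSum, gaussRemainder]
  | succ n ih =>
    have hsum : thetaPartialSum q (n + 1) =
        thetaPartialSum q n + 2 * ((-1) ^ (n + 1) * q ^ (n + 1) ^ 2) := by
      rw [thetaPartialSum, thetaPartialSum, sum_range_succ]
      ring
    rw [hsum, gaussRemainder_succ, prod_range_succ (fun i ↦ 1 - q ^ (i + 1)),
      prod_range_succ (fun i ↦ 1 + q ^ (i + 1))]
    linear_combination (1 + q ^ (n + 1)) * ih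

theorem pow_dvd_gaussRemainder (q : R) (n : ℕ) : q ^ (n + 1) ∣ gaussRemainder q n :=
  dvd_sum fun k _ ↦ Dvd.dvd.mul_right (Dvd.dvd.mul_left
    (pow_dvd_pow q (Nat.le_mul_of_pos_left _ k.succ_pos)) _) _

end FiniteGaussIdentity

/-- The theta series `∑_{j ∈ ℤ} (-1) ^ j X ^ (j ^ 2)`; its coefficients are described through
`(-1) ^ (j ^ 2) = (-1) ^ j`. -/
noncomputable def thetaSeries : ℤ⟦X⟧ :=
  .mk fun n ↦ if n = 0 then 1 else if IsSquare n then 2 * (-1) ^ n else 0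

theorem coeff_thetaPartialSum_X {m n : ℕ} (hmn : m ≤ n) :
    (thetaPartialSum (X : ℤ⟦X⟧) n).coeff m = thetaSeries.coeff m := by
  have hcoeff (j : ℕ) : ((-1 : ℤ⟦X⟧) ^ (j + 1) * X ^ (j + 1) ^ 2).coeff m =
      if m = (j + 1) ^ 2 then (-1) ^ m else 0 := by
    rw [show (-1 : ℤ⟦X⟧) = C (-1) by simp, ← map_pow, coeff_C_mul, coeff_X_pow, mul_ite,
      mul_one, mul_zero]
    refine ite_congr rfl (fun h ↦ ?_) fun _ ↦ rfl
    exact neg_one_pow_congr (by rw [h]; simp [parity_simps])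
  rw [thetaPartialSum, map_add, show (2 : ℤ⟦X⟧) = C 2 by simp, coeff_C_mul, map_sum,
    thetaSeries, coeff_mk, coeff_one]
  simp only [hcoeff]
  rcases eq_or_ne m 0 with rfl | hm
  · simp [(pow_ne_zero 2 (Nat.succ_ne_zero _)).symm]
  rw [if_neg hm, if_neg hm, zero_add]
  split_ifs with hsq
  · obtain ⟨r, rfl⟩ := hsq
    obtain ⟨r, rfl⟩ := Nat.exists_eq_succ_of_ne_zero (left_ne_zero_of_mul hm)
    rw [sum_eq_single r, if_pos (sq _).symm]
    · intro j _ hj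
      exact if_neg fun h ↦ hj (by simpa [← sq, eq_comm] using h)
    · intro hr
      exact absurd (mem_range.mpr (by nlinarith)) hr
  · rw [sum_eq_zero, mul_zero]
    exact fun j _ ↦ if_neg fun h ↦ hsq ⟨j + 1, h.trans (sq _)⟩

/-- The generating function of overpartitions all of whose parts satisfy `p`. -/
noncomputable def overpartitionSeries (p : ℕ → Prop) [DecidablePred p] : ℤ⟦X⟧ :=
  Nat.Partition.genFun fun i _ ↦ if p i then 2 else 0

theorem natCast_biregOverpartitions_eq_coeff (l₁ l₂ n : ℕ) :
    (biregOverpartitions l₁ l₂ n : ℤ) =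
      (overpartitionSeries fun i ↦ ¬ l₁ ∣ i ∧ ¬ l₂ ∣ i).coeff n := by
  rw [overpartitionSeries, Nat.Partition.coeff_genFun, biregOverpartitions, Nat.cast_sum]
  refine sum_congr rfl fun p _ ↦ ?_
  rw [Finsupp.prod, Multiset.toFinsupp_support, prod_ite_zero, prod_const]
  simp only [Multiset.mem_toFinset]
  push_cast
  rfl

/-- The factor `1 + 2 X ^ i + 2 X ^ (2 * i) + ⋯ = (1 + X ^ i) / (1 - X ^ i)` that parts of size `i`
contribute to a generating function of overpartitions. -/
noncomputable def overpartitionFactor (i : ℕ) : ℤ⟦X⟧ :=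
  1 + ∑' j : ℕ, 2 * X ^ (i * (j + 1))

theorem overpartitionFactor_mul_one_sub {i : ℕ} (hi : i ≠ 0) :
    overpartitionFactor i * (1 - X ^ i) = 1 + X ^ i := by
  have hX : constantCoeff (X ^ i : ℤ⟦X⟧) = 0 := by simp [hi]
  have hsum : ∑' j : ℕ, 2 * (X : ℤ⟦X⟧) ^ (i * (j + 1)) =
      2 * X ^ i * ∑' j : ℕ, (X ^ i) ^ j := by
    rw [← (WithPiTopology.summable_pow_of_constantCoeff_eq_zero hX).tsum_mul_left]
    refine tsum_congr fun j ↦ ?_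
    ring
  rw [overpartitionFactor, hsum]
  linear_combination
    2 * X ^ i * WithPiTopology.tsum_pow_mul_one_sub_of_constantCoeff_eq_zero hX

theorem expand_overpartitionFactor {k i : ℕ} (hk : k ≠ 0) (hi : i ≠ 0) :
    expand k hk (overpartitionFactor i) = overpartitionFactor (k * i) := by
  have hki := mul_ne_zero hk hi
  have hne : (1 - X ^ (k * i) : ℤ⟦X⟧) ≠ 0 := fun h ↦ by
    simpa [hki] using congrArg constantCoeff h
  refine mul_right_cancel₀ hne ?_
  have h := congrArg (expand k hk) (overpartitionFactor_mul_one_sub hi)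
  simp only [map_mul, map_sub, map_add, map_one, map_pow, expand_X, ← pow_mul] at h
  rw [h, overpartitionFactor_mul_one_sub hki]

theorem hasProd_overpartitionSeries (p : ℕ → Prop) [DecidablePred p] :
    HasProd (fun i ↦ if p (i + 1) then overpartitionFactor (i + 1) else 1)
      (overpartitionSeries p) := by
  convert! Nat.Partition.hasProd_genFun (fun i _ ↦ if p i then (2 : ℤ) else 0) using 2 with i
  split_ifs <;> simp [overpartitionFactor, PowerSeries.smul_eq_C_mul]

theorem overpartitionSeries_dvd_eq_expand {k : ℕ} (hk : k ≠ 0) :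
    overpartitionSeries (k ∣ ·) = expand k hk (overpartitionSeries fun _ ↦ True) := by
  have hexpand := (hasProd_overpartitionSeries fun _ ↦ True).map (expand k hk)
    (continuous_expand hk)
  have hpos (j : ℕ) : 0 < k * (j + 1) := by positivity
  have hsub (j : ℕ) : k * (j + 1) - 1 + 1 = k * (j + 1) := Nat.sub_add_cancel (hpos j)
  have hinj : Function.Injective fun j ↦ k * (j + 1) - 1 := fun a b h ↦ by
    have h' := congrArg (· + 1) h
    simpa only [hsub, mul_right_inj' hk, add_left_inj] using h'
  refine ((hinj.hasProd_iff ?_).mpr (hasProd_overpartitionSeries (k ∣ ·))).unique ?_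
  · intro i hi
    refine if_neg fun ⟨c, hc⟩ ↦ hi ?_
    obtain ⟨j, rfl⟩ := Nat.exists_eq_add_one_of_ne_zero (n := c) (by rintro rfl; simp at hc)
    exact ⟨j, Nat.add_right_cancel ((hsub j).trans hc.symm)⟩
  · convert! hexpand using 1
    funext j
    simp [hsub, expand_overpartitionFactor hk]

theorem overpartitionSeries_biregular_mul {l₁ l₂ : ℕ} (h₁ : l₁ ≠ 0) (h₂ : l₂ ≠ 0)
    (hcop : l₁.Coprime l₂) :
    overpartitionSeries (fun i ↦ ¬ l₁ ∣ i ∧ ¬ l₂ ∣ i) *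
        expand l₁ h₁ (overpartitionSeries fun _ ↦ True) *
        expand l₂ h₂ (overpartitionSeries fun _ ↦ True) =
      (overpartitionSeries fun _ ↦ True) *
        expand l₁ h₁ (expand l₂ h₂ (overpartitionSeries fun _ ↦ True)) := by
  rw [← expand_mul, ← overpartitionSeries_dvd_eq_expand, ← overpartitionSeries_dvd_eq_expand,
    ← overpartitionSeries_dvd_eq_expand]
  refine (((hasProd_overpartitionSeries _).mul (hasProd_overpartitionSeries _)).mul
    (hasProd_overpartitionSeries _)).unique ?_
  convert (hasProd_overpartitionSeries _).mul (hasProd_overpartitionSeries _) using 2 with i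
  have hdvd : l₁ * l₂ ∣ i + 1 ↔ l₁ ∣ i + 1 ∧ l₂ ∣ i + 1 :=
    ⟨fun h ↦ ⟨dvd_of_mul_right_dvd h, dvd_of_mul_left_dvd h⟩,
      fun h ↦ hcop.mul_dvd_of_dvd_of_dvd h.1 h.2⟩
  simp only [hdvd]
  by_cases hd₁ : l₁ ∣ i + 1 <;> by_cases hd₂ : l₂ ∣ i + 1 <;> simp [hd₁, hd₂]

theorem tendsto_thetaPartialSum_X :
    Tendsto (thetaPartialSum (X : ℤ⟦X⟧)) atTop (𝓝 thetaSeries) := by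
  rw [WithPiTopology.tendsto_iff_coeff_tendsto]
  intro d
  refine tendsto_const_nhds.congr' ?_
  filter_upwards [eventually_ge_atTop d] with n hn
  rw [coeff_thetaPartialSum_X hn]

theorem thetaSeries_mul_overpartitionSeries :
    thetaSeries * overpartitionSeries (fun _ ↦ True) = 1 := by
  have hE : HasProd (fun i ↦ 1 - X ^ (i + 1) : ℕ → ℤ⟦X⟧) (∏' i : ℕ, (1 - X ^ (i + 1))) :=
    (WithPiTopology.multipliable_one_sub_X_pow ℤ).hasProd
  have hD : HasProd (fun i ↦ 1 + X ^ (i + 1) : ℕ → ℤ⟦X⟧)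
      (overpartitionSeries (fun _ ↦ True) * ∏' i : ℕ, (1 - X ^ (i + 1))) := by
    simpa [overpartitionFactor_mul_one_sub] using
      (hasProd_overpartitionSeries fun _ ↦ True).mul hE
  have hremainder : Tendsto (fun n ↦ 2 * gaussRemainder (X : ℤ⟦X⟧) n) atTop (𝓝 0) :=
    tendsto_zero_of_X_pow_dvd fun n ↦ (pow_dvd_gaussRemainder X n).mul_left 2
  have hlim := (tendsto_thetaPartialSum_X.mul hD.tendsto_prod_nat).congr
    (thetaPartialSum_mul_prod_one_add X)
  have hgauss := tendsto_nhds_unique hlim (hE.tendsto_prod_nat.add hremainder)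
  refine mul_right_cancel₀ (WithPiTopology.tprod_one_sub_X_pow_ne_zero ℤ) ?_
  linear_combination hgauss

/-- The quotient `θ(X) / θ(X ^ l)` of theta series, where the inverse of `θ` is the generating
function of overpartitions. -/
noncomputable def thetaQuotient (l : ℕ) (hl : l ≠ 0) : ℤ⟦X⟧ :=
  thetaSeries * expand l hl (overpartitionSeries fun _ ↦ True)

theorem biregular_mul_thetaQuotient {l₁ l₂ : ℕ} (h₁ : l₁ ≠ 0) (h₂ : l₂ ≠ 0)
    (hcop : l₁.Coprime l₂) :
    overpartitionSeries (fun i ↦ ¬ l₁ ∣ i ∧ ¬ l₂ ∣ i) * thetaQuotient l₂ h₂ =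
      expand l₁ h₁ (thetaQuotient l₂ h₂) := by
  have hgauss := thetaSeries_mul_overpartitionSeries
  have hgauss_expand := congrArg (expand l₁ h₁) hgauss
  rw [map_mul, map_one] at hgauss_expand
  have hbireg := overpartitionSeries_biregular_mul h₁ h₂ hcop
  rw [thetaQuotient, map_mul]
  set F := overpartitionSeries fun i ↦ ¬ l₁ ∣ i ∧ ¬ l₂ ∣ i
  set P := overpartitionSeries fun _ ↦ True
  linear_combination thetaSeries * expand l₁ h₁ thetaSeries * hbireg +
    expand l₁ h₁ thetaSeries * expand l₁ h₁ (expand l₂ h₂ P) * hgauss -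
    F * thetaSeries * expand l₂ h₂ P * hgauss_expand

/-- The power series `B` of the `3`-dissection `θ(X) = θ(X ^ 9) + 2 X B(X ^ 3)`; the coefficient of
`X ^ n` in `B` is half that of `X ^ (3 * n + 1)` in `θ`. -/
noncomputable def thetaDissection : ℤ⟦X⟧ :=
  .mk fun n ↦ if IsSquare (3 * n + 1) then (-1) ^ (3 * n + 1) else 0

theorem isSquare_nine_mul {k : ℕ} : IsSquare (9 * k) ↔ IsSquare k := by
  refine ⟨fun ⟨r, hr⟩ ↦ ?_, fun h ↦ (show IsSquare 9 from ⟨3, rfl⟩).mul h⟩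
  obtain ⟨s, rfl⟩ : 3 ∣ r := (Nat.prime_three.dvd_mul.mp ⟨3 * k, by omega⟩).elim id id
  exact ⟨s, by linarith⟩

theorem nine_dvd_or_mod_three_eq_one {n : ℕ} (hn : IsSquare n) : 9 ∣ n ∨ n % 3 = 1 := by
  obtain ⟨r, rfl⟩ := hn
  by_cases h : 3 ∣ r
  · exact .inl (mul_dvd_mul h h)
  · right
    have : r % 3 = 1 ∨ r % 3 = 2 := by omega
    rcases this with h | h <;> simp [Nat.mul_mod, h]

theorem thetaSeries_eq_expand_nine_add :
    thetaSeries = expand 9 (by norm_num) thetaSeries +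
      2 * (X * expand 3 three_ne_zero thetaDissection) := by
  ext n
  rw [map_add, show (2 : ℤ⟦X⟧) = C 2 by simp, coeff_C_mul, coeff_expand]
  obtain hn | ⟨m, rfl⟩ : n % 3 ≠ 1 ∨ ∃ m, n = 3 * m + 1 := by
    by_cases h : n % 3 = 1
    · exact .inr ⟨n / 3, by omega⟩
    · exact .inl h
  · rw [coeff_X_mul_expand_three_of_mod_ne_one _ hn, mul_zero, add_zero]
    split_ifs with h9
    · obtain ⟨k, rfl⟩ := h9
      rw [Nat.mul_div_cancel_left k (by norm_num)]
      simp [thetaSeries, isSquare_nine_mul, pow_mul]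
    · have hsq : ¬ IsSquare n := fun hsq ↦ (nine_dvd_or_mod_three_eq_one hsq).elim h9 hn
      have hne : n ≠ 0 := by rintro rfl; simp at h9
      simp [thetaSeries, hsq, hne]
  · rw [if_neg (by omega), zero_add, coeff_succ_X_mul, coeff_expand_mul]
    simp [thetaSeries, thetaDissection]

theorem exists_thetaQuotient_nine_eq :
    ∃ W : ℤ⟦X⟧, thetaQuotient 9 (by norm_num) = 1 + 2 * (X * expand 3 three_ne_zero W) := by
  have hnine (f : ℤ⟦X⟧) : expand 9 (by norm_num) f =
      expand 3 three_ne_zero (expand 3 three_ne_zero f) :=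
    expand_mul (p := 3) three_ne_zero 3 three_ne_zero f
  have hgauss := congrArg (expand 9 (by norm_num)) thetaSeries_mul_overpartitionSeries
  rw [map_mul, map_one] at hgauss
  refine ⟨thetaDissection * expand 3 three_ne_zero (overpartitionSeries fun _ ↦ True), ?_⟩
  rw [thetaQuotient, thetaSeries_eq_expand_nine_add, add_mul, hgauss, map_mul, ← hnine]
  ring

theorem eq_of_mul_one_add_two_mul_eq {R : Type*} [CommRing R] {F u v : R}
    (h : F * (1 + 2 * u) = 1 + 2 * v) :
    F = 1 - 2 * u + 2 * v + 4 * (u ^ 2 - u * v) + 8 * (u ^ 2 * v - F * u ^ 3) := by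
  linear_combination (1 - 2 * u + 4 * u ^ 2) * h

theorem eight_dvd_coeff_of_mul_eq_expand {F f : ℤ⟦X⟧} {l : ℕ} (hl : l ≠ 0) (hmod : l ≡ 2 [MOD 6])
    (hF : F * (1 + 2 * (X * expand 3 three_ne_zero f)) =
      expand l hl (1 + 2 * (X * expand 3 three_ne_zero f))) (n : ℕ) :
    8 ∣ F.coeff (6 * n + 5) := by
  have hmod' : l % 6 = 2 := hmod
  have hu : (X * expand 3 three_ne_zero f).coeff (6 * n + 5) = 0 :=
    coeff_X_mul_expand_three_of_mod_ne_one f (by omega)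
  have hv : (expand l hl (X * expand 3 three_ne_zero f)).coeff (6 * n + 5) = 0 :=
    coeff_expand_of_not_dvd _ _ _ fun h ↦ by
      have heven : 2 ∣ 6 * n + 5 := dvd_trans (by omega) h
      omega
  have huv := coeff_mul_expand_X_mul_expand_three f hl (n := 6 * n + 5) (by omega) (by omega)
  obtain ⟨c, hc⟩ := two_dvd_coeff_sq_X_mul_expand_three f n
  rw [map_add, map_one, map_mul, map_ofNat] at hF
  rw [eq_of_mul_one_add_two_mul_eq hF]
  simp only [← map_ofNat (C (R := ℤ)), map_add, map_sub, coeff_C_mul, hu, hv, huv, hc, coeff_one]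
  rw [if_neg (by omega)]
  omega

theorem B29_mod8_6n5_general {l : ℕ} (hl : l ≡ 2 [MOD 6]) (n : ℕ) :
    8 ∣ biregOverpartitions l 9 (6 * n + 5) := by
  have hl₀ : l ≠ 0 := by rintro rfl; contradiction
  have hndvd : ¬ 3 ∣ l := by have : l % 6 = 2 := hl; omega
  have hcop : l.Coprime 9 := by
    have h3 : l.Coprime 3 := (Nat.prime_three.coprime_iff_not_dvd.mpr hndvd).symm
    exact h3.pow_right 2
  obtain ⟨W, hW⟩ := exists_thetaQuotient_nine_eq
  have hfun := biregular_mul_thetaQuotient hl₀ (by norm_num) hcop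
  rw [hW] at hfun
  have hdvd := eight_dvd_coeff_of_mul_eq_expand hl₀ hl hfun n
  rw [← natCast_biregOverpartitions_eq_coeff] at hdvd
  exact_mod_cast hdvd

theorem B29_mod8_6n5 (n : ℕ) : 8 ∣ biregOverpartitions 2 9 (6 * n + 5) :=
  B29_mod8_6n5_general rfl n
end

section
/- Let k ≥ 0 and n ≥ 0 be integers, and let p₁, p₂, …, p_{k+1} be primes such that pᵢ ≥ 5 and pᵢ ≢ 1 (mod 6) for each 1 ≤ i ≤ k+1. Then for every positive integer j with j ≢ 0 (mod p_{k+1}), we have B̄_{2,9}( 6·p₁²p₂²⋯p_{k+1}²·n + (6j + p_{k+1})·p₁²p₂²⋯p_k²·p_{k+1} ) ≡ 0 (mod 8). -/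
/-!
Overpartitions with parts in `T` have generating function `∏ (1 + 2 * G a)` over `a ∈ T`, where
`G a = X ^ a + X ^ (2 * a) + ⋯`. Modulo `8` only the first two elementary symmetric functions of the
`G a` survive, and twice the second one is `(∑ G a) ^ 2 - ∑ G a ^ 2`. The coefficients of `∑ G a`
count divisors in `T`, and those of `∑ G a ^ 2` sum `n / a - 1` over the same divisors. For
`n ≡ 1 (mod 6)` the convolution coming from `(∑ G a) ^ 2` is divisible by `4`. Indeed, in each
splitting `n = i + j`, either one of `i`, `j` is divisible by `3` and its admissible divisors pair
up, or both are `≡ 2 (mod 3)` and the odd one, not being a square, has an even number of divisors;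
so each term is even, and the terms of `(i, j)` and `(j, i)` are equal. Hence the count is
`≡ 2 * σ 1 n (mod 8)`.

If a prime `q ≡ 2 (mod 3)` divides such an `n` exactly to an odd power `e`, then `q ^ e` and
`n / q ^ e` are both `≡ 2 (mod 3)`, hence not squares; their divisor sums are therefore even, and
`4 ∣ σ 1 n`. In the family considered, the last prime divides the argument once directly and
otherwise only through a square.
-/

open Finset PowerSeries
open scoped PowerSeries.WithPiTopology ArithmeticFunction.sigma

theorem even_card_of_involution {α : Type*} {s : Finset α} (g : α → α)
    (hmem : ∀ a ∈ s, g a ∈ s) (hne : ∀ a ∈ s, g a ≠ a) (hinv : ∀ a ∈ s, g (g a) = a) :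
    Even #s := by
  have hsum : ∑ _a ∈ s, (1 : ZMod 2) = 0 :=
    sum_involution (fun a _ => g a) (fun _ _ => by decide) (fun a ha _ => hne a ha) hmem hinv
  rwa [sum_const, nsmul_one, ZMod.natCast_eq_zero_iff_even] at hsum

theorem even_card_divisors_of_not_isSquare {n : ℕ} (hn : ¬ IsSquare n) : Even #n.divisors := by
  refine even_card_of_involution (n / ·) (fun d hd => ?_) (fun d hd hfix => ?_) fun d hd => ?_
  · exact Nat.mem_divisors.2 ⟨Nat.div_dvd_of_dvd (Nat.dvd_of_mem_divisors hd),
      Nat.ne_zero_of_mem_divisors hd⟩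
  · exact hn ⟨d, by nth_rw 1 [← hfix, Nat.div_mul_cancel (Nat.dvd_of_mem_divisors hd)]⟩
  · exact Nat.div_div_self (Nat.dvd_of_mem_divisors hd) (Nat.ne_zero_of_mem_divisors hd)

theorem even_sigma_one_iff_even_card_divisors {n : ℕ} (hn : Odd n) :
    Even (σ 1 n) ↔ Even #n.divisors := by
  rw [ArithmeticFunction.sigma_one_apply, even_sum_iff_even_card_odd,
    filter_true_of_mem fun d hd => hn.of_dvd_nat (Nat.dvd_of_mem_divisors hd)]

theorem not_isSquare_of_mod_three_eq_two {n : ℕ} (hn : n % 3 = 2) : ¬ IsSquare n := by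
  rintro ⟨r, rfl⟩
  have hr : r % 3 < 3 := Nat.mod_lt _ three_pos
  rw [Nat.mul_mod] at hn
  interval_cases r % 3 <;> simp at hn

theorem even_card_divisors_of_mod_three_eq_two {n : ℕ} (hn : n % 3 = 2) : Even #n.divisors :=
  even_card_divisors_of_not_isSquare (not_isSquare_of_mod_three_eq_two hn)

theorem even_sigma_one_of_mod_three_eq_two {n : ℕ} (hodd : Odd n) (hn : n % 3 = 2) :
    Even (σ 1 n) :=
  (even_sigma_one_iff_even_card_divisors hodd).2 (even_card_divisors_of_mod_three_eq_two hn)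

theorem four_dvd_sigma_one_of_odd_factorization {N q : ℕ} (hN : N % 6 = 1) (hq : q % 3 = 2)
    (hodd : Odd (N.factorization q)) : 4 ∣ σ 1 N := by
  have hN0 : N ≠ 0 := by lia
  have hqp : q.Prime := by
    by_contra h
    simp [Nat.factorization_eq_zero_of_not_prime N h] at hodd
  set e := N.factorization q
  set M := N / q ^ e
  have hmul : q ^ e * M = N := Nat.ordProj_mul_ordCompl_eq_self N q
  have hparity : Odd (q ^ e) ∧ Odd M := by
    rw [← Nat.odd_mul, hmul, Nat.odd_iff]
    lia
  have hpow : q ^ e % 3 = 2 := by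
    obtain ⟨k, hk⟩ := hodd
    rw [hk, pow_succ, pow_mul, Nat.mul_mod, Nat.pow_mod, Nat.pow_mod q, hq]
    norm_num
  have hM : M % 3 = 2 := by
    have hmod : q ^ e * M % 3 = 1 := by lia
    rw [Nat.mul_mod, hpow] at hmod
    lia
  have hcop : (q ^ e).Coprime M := (Nat.coprime_ordCompl hqp hN0).pow_left e
  rw [← hmul, ArithmeticFunction.isMultiplicative_sigma.map_mul_of_coprime hcop]
  exact mul_dvd_mul (even_sigma_one_of_mod_three_eq_two hparity.1 hpow).two_dvd
    (even_sigma_one_of_mod_three_eq_two hparity.2 hM).two_dvd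

/-- The divisors of `n` divisible by neither `l₁` nor `l₂`, that is, the part sizes of the
`(l₁, l₂)`-biregular partitions of `n` into equal parts. -/
def biregDivisors (l₁ l₂ n : ℕ) : Finset ℕ :=
  {d ∈ n.divisors | ¬ l₁ ∣ d ∧ ¬ l₂ ∣ d}

theorem mem_biregDivisors {l₁ l₂ n d : ℕ} :
    d ∈ biregDivisors l₁ l₂ n ↔ (d ∣ n ∧ n ≠ 0) ∧ ¬ l₁ ∣ d ∧ ¬ l₂ ∣ d := by
  rw [biregDivisors, mem_filter, Nat.mem_divisors]

theorem biregDivisors_eq_divisors {l₁ l₂ n : ℕ} (h₁ : ¬ l₁ ∣ n) (h₂ : ¬ l₂ ∣ n) :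
    biregDivisors l₁ l₂ n = n.divisors :=
  filter_true_of_mem fun _ hd => ⟨fun h => h₁ (h.trans (Nat.dvd_of_mem_divisors hd)),
    fun h => h₂ (h.trans (Nat.dvd_of_mem_divisors hd))⟩

-- The divisors in question pair up as `d` and `p * d` with `d` prime to `p`.
theorem even_card_biregDivisors_prime_sq {l p n : ℕ} (hp : p.Prime) (hl : l.Coprime p)
    (hn : p ∣ n) : Even #(biregDivisors l (p ^ 2) n) := by
  have hsq {d : ℕ} : p ^ 2 ∣ p * d ↔ p ∣ d := by
    rw [sq, Nat.mul_dvd_mul_iff_left hp.pos]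
  have hmul {d : ℕ} (hd : d ∈ biregDivisors l (p ^ 2) n) (h : ¬ p ∣ d) :
      p * d ∈ biregDivisors l (p ^ 2) n := by
    rw [mem_biregDivisors] at hd ⊢
    obtain ⟨⟨hdn, hn0⟩, hld, -⟩ := hd
    exact ⟨⟨((hp.coprime_iff_not_dvd).2 h).mul_dvd_of_dvd_of_dvd hn hdn, hn0⟩,
      fun hb => hld (hl.dvd_of_dvd_mul_left hb), fun hb => h (hsq.1 hb)⟩
  have hdiv {d : ℕ} (hd : p * d ∈ biregDivisors l (p ^ 2) n) :
      d ∈ biregDivisors l (p ^ 2) n ∧ ¬ p ∣ d := by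
    rw [mem_biregDivisors, hsq] at hd
    obtain ⟨⟨hdn, hn0⟩, hld, hpd⟩ := hd
    exact ⟨mem_biregDivisors.2 ⟨⟨(dvd_mul_left d p).trans hdn, hn0⟩,
      fun hb => hld (hb.mul_left p), fun hb => hpd ((dvd_pow_self p two_ne_zero).trans hb)⟩, hpd⟩
  refine even_card_of_involution (fun d => if p ∣ d then d / p else p * d)
    (fun d hd => ?_) (fun d hd => ?_) fun d hd => ?_
  all_goals
    by_cases h : p ∣ d
    on_goal 1 => obtain ⟨b, rfl⟩ := h
  · simpa [hp.pos] using (hdiv hd).1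
  · simpa [h] using hmul hd h
  · simpa [hp.pos] using fun hb : b = p * b => (hdiv hd).2 ⟨b, hb⟩
  · simpa [h] using fun hb : p * d = d => h ⟨d, hb.symm⟩
  · simp [hp.pos, (hdiv hd).2]
  · simp [h, hp.pos]

theorem even_card_biregDivisors_two_nine_of_three_dvd {n : ℕ} (hn : 3 ∣ n) :
    Even #(biregDivisors 2 9 n) :=
  even_card_biregDivisors_prime_sq Nat.prime_three (by norm_num) hn

theorem even_card_biregDivisors_two_nine_of_odd {n : ℕ} (hodd : Odd n) (hn : n % 3 = 2) :
    Even #(biregDivisors 2 9 n) := by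
  rw [biregDivisors_eq_divisors hodd.not_two_dvd_nat (by lia)]
  exact even_card_divisors_of_mod_three_eq_two hn

theorem even_card_biregDivisors_two_nine_mul {i j : ℕ} (h : (i + j) % 6 = 1) :
    Even (#(biregDivisors 2 9 i) * #(biregDivisors 2 9 j)) := by
  rw [Nat.even_mul]
  by_cases hi : 3 ∣ i
  · exact .inl (even_card_biregDivisors_two_nine_of_three_dvd hi)
  by_cases hj : 3 ∣ j
  · exact .inr (even_card_biregDivisors_two_nine_of_three_dvd hj)
  obtain hodd | hodd : Odd i ∨ Odd j := by grind
  · exact .inl (even_card_biregDivisors_two_nine_of_odd hodd (by lia))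
  · exact .inr (even_card_biregDivisors_two_nine_of_odd hodd (by lia))

theorem four_dvd_sum_antidiagonal_of_odd {n : ℕ} (hn : Odd n) (f : ℕ → ℕ)
    (hf : ∀ ij ∈ antidiagonal n, Even (f ij.1 * f ij.2)) :
    4 ∣ ∑ ij ∈ antidiagonal n, f ij.1 * f ij.2 := by
  rw [← ZMod.natCast_eq_zero_iff, Nat.cast_sum]
  refine sum_involution (fun ij _ => ij.swap) (fun ij hij => ?_) (fun ij hij _ hfix => ?_)
    (fun ij hij => HasAntidiagonal.swap_mem_antidiagonal.2 hij) fun _ _ => Prod.swap_swap _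
  · obtain ⟨c, hc⟩ := hf ij hij
    rw [Prod.fst_swap, Prod.snd_swap, mul_comm (f ij.2), ← Nat.cast_add,
      ZMod.natCast_eq_zero_iff]
    lia
  · have hsum := mem_antidiagonal.1 hij
    have heq : ij.2 = ij.1 := congrArg Prod.fst hfix
    exact Nat.not_even_iff_odd.2 hn ⟨ij.1, by lia⟩

section CommRing

variable {R : Type*} [CommRing R]

theorem two_dvd_sum_sq_sub_sum_sq {ι : Type*} (s : Finset ι) (x : ι → R) :
    2 ∣ (∑ i ∈ s, x i) ^ 2 - ∑ i ∈ s, x i ^ 2 := by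
  classical
  induction s using Finset.induction_on with
  | empty => simp
  | insert a s ha ih =>
    obtain ⟨e, he⟩ := ih
    rw [sum_insert ha, sum_insert ha]
    exact ⟨e + x a * ∑ i ∈ s, x i, by linear_combination he⟩

theorem prod_one_add_two_mul_of_eight_eq_zero (h8 : (8 : R) = 0) {ι : Type*} (s : Finset ι)
    (x : ι → R) :
    ∏ i ∈ s, (1 + 2 * x i) =
      1 + 2 * ∑ i ∈ s, x i + 2 * ((∑ i ∈ s, x i) ^ 2 - ∑ i ∈ s, x i ^ 2) := by
  classical
  induction s using Finset.induction_on with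
  | empty => simp
  | insert a s ha ih =>
    obtain ⟨e, he⟩ := two_dvd_sum_sq_sub_sum_sq s x
    rw [prod_insert ha, sum_insert ha, sum_insert ha, ih]
    linear_combination 4 * x a * he + x a * e * h8

variable (R) in
/-- The series `X ^ a + X ^ (2 * a) + X ^ (3 * a) + ⋯`, with the convention that it vanishes for
`a = 0`. -/
noncomputable def multiplesSeries (a : ℕ) : R⟦X⟧ :=
  .mk fun n => if a ∈ n.divisors then 1 else 0

theorem coeff_multiplesSeries (a n : ℕ) :
    coeff n (multiplesSeries R a) = if a ∈ n.divisors then 1 else 0 :=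
  coeff_mk _ _

theorem multiplesSeries_zero : multiplesSeries R 0 = 0 := by
  ext n
  simp [coeff_multiplesSeries]

theorem multiplesSeries_eq_expand {a : ℕ} (ha : a ≠ 0) :
    multiplesSeries R a = expand a ha (X * .mk 1) := by
  ext n
  rw [coeff_multiplesSeries, coeff_expand]
  by_cases hdvd : a ∣ n
  · obtain ⟨m, rfl⟩ := hdvd
    cases m <;> simp [ha, coeff_succ_X_mul]
  · simp [hdvd]

theorem hasSum_X_pow_mul_succ [TopologicalSpace R] {a : ℕ} (ha : a ≠ 0) :
    HasSum (fun j => (X : R⟦X⟧) ^ (a * (j + 1))) (multiplesSeries R a) := by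
  refine (WithPiTopology.hasSum_iff_hasSum_coeff R).2 fun n => ?_
  simp only [coeff_X_pow, coeff_multiplesSeries]
  split_ifs with hdiv
  · obtain ⟨m, rfl⟩ := Nat.dvd_of_mem_divisors hdiv
    obtain ⟨k, rfl⟩ := Nat.exists_eq_succ_of_ne_zero
      (right_ne_zero_of_mul (Nat.ne_zero_of_mem_divisors hdiv))
    convert hasSum_ite_eq k (1 : R) using 3 with j
    simp [ha, eq_comm]
  · convert hasSum_zero with j
    rw [if_neg]
    rintro rfl
    exact hdiv (Nat.mem_divisors.2 ⟨dvd_mul_right _ _, by positivity⟩)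

theorem coeff_multiplesSeries_sq (a n : ℕ) :
    coeff n (multiplesSeries R a ^ 2) = if a ∈ n.divisors then ((n / a : ℕ) : R) - 1 else 0 := by
  obtain rfl | ha := eq_or_ne a 0
  · simp [multiplesSeries_zero]
  rw [multiplesSeries_eq_expand ha, ← map_pow, mul_pow, mk_one_pow_eq_mk_choose_add, coeff_expand,
    coeff_X_pow_mul']
  by_cases hdvd : a ∣ n
  · obtain ⟨m, rfl⟩ := hdvd
    obtain _ | _ | m := m <;> simp [ha, Nat.pos_of_ne_zero ha, add_comm 1]
  · simp [hdvd]

theorem coeff_sum_multiplesSeries (T : Finset ℕ) (n : ℕ) :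
    coeff n (∑ a ∈ T, multiplesSeries R a) = #(n.divisors ∩ T) := by
  simp only [map_sum, coeff_multiplesSeries, sum_boole, filter_mem_eq_inter, inter_comm]

theorem coeff_sum_multiplesSeries_sq (T : Finset ℕ) (n : ℕ) :
    coeff n (∑ a ∈ T, multiplesSeries R a ^ 2) =
      ∑ a ∈ n.divisors ∩ T, (((n / a : ℕ) : R) - 1) := by
  simp only [map_sum, coeff_multiplesSeries_sq, ← sum_filter, filter_mem_eq_inter, inter_comm]

theorem tsum_C_mul_X_pow_mul_succ [TopologicalSpace R] [T2Space R] [IsTopologicalSemiring R]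
    (c : R) {a : ℕ} (ha : a ≠ 0) :
    ∑' j, C c * (X : R⟦X⟧) ^ (a * (j + 1)) = C c * multiplesSeries R a :=
  ((hasSum_X_pow_mul_succ ha).mul_left (C c)).tsum_eq

theorem genFun_eq_prod_one_add_mul_multiplesSeries {T : Finset ℕ} {w : ℕ → R}
    (hw : ∀ a ∉ T, w a = 0) :
    Nat.Partition.genFun (fun a _ => w a) = ∏ a ∈ T, (1 + C (w a) * multiplesSeries R a) := by
  let : TopologicalSpace R := ⊥
  have : DiscreteTopology R := ⟨rfl⟩
  have hfactor (i : ℕ) : 1 + ∑' j, C (w (i + 1)) * (X : R⟦X⟧) ^ ((i + 1) * (j + 1)) =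
      1 + C (w (i + 1)) * multiplesSeries R (i + 1) := by
    rw [tsum_C_mul_X_pow_mul_succ _ i.succ_ne_zero]
  have hprod := Nat.Partition.hasProd_genFun fun a _ => w a
  simp only [smul_eq_C_mul, hfactor] at hprod
  refine (hprod.unique (hasProd_prod_of_ne_finset_one
    (s := T.preimage (· + 1) (add_left_injective 1).injOn) fun i hi => ?_)).trans ?_
  · rw [hw _ (by simpa using hi), map_zero, zero_mul, add_zero]
  · refine prod_preimage (· + 1) T _ (fun a => 1 + C (w a) * multiplesSeries R a) fun a _ ha => ?_
    obtain rfl : a = 0 := by simpa using ha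
    rw [multiplesSeries_zero, mul_zero, add_zero]

end CommRing

theorem biregOverpartitions_eq_coeff_prod (R : Type*) [CommRing R] (l₁ l₂ n : ℕ) :
    (biregOverpartitions l₁ l₂ n : R) =
      coeff n (∏ a ∈ Icc 1 n with ¬ l₁ ∣ a ∧ ¬ l₂ ∣ a, (1 + 2 * multiplesSeries R a)) := by
  set T : Finset ℕ := {a ∈ Icc 1 n | ¬ l₁ ∣ a ∧ ¬ l₂ ∣ a} with hT
  have hgenFun := genFun_eq_prod_one_add_mul_multiplesSeries (T := T)
    (w := fun a => if a ∈ T then (2 : R) else 0) fun a ha => if_neg ha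
  rw [prod_congr rfl fun a ha => by rw [if_pos ha, map_ofNat]] at hgenFun
  rw [← hgenFun, Nat.Partition.coeff_genFun, biregOverpartitions, Nat.cast_sum]
  refine sum_congr rfl fun p _ => ?_
  have hparts : (∀ a ∈ p.parts, ¬ l₁ ∣ a ∧ ¬ l₂ ∣ a) ↔ ∀ a ∈ p.parts.toFinset, a ∈ T := by
    simp only [Multiset.mem_toFinset, hT, mem_filter, mem_Icc]
    exact forall₂_congr fun a ha =>
      (and_iff_right ⟨p.parts_pos ha, p.le_of_mem_parts ha⟩).symm
  simp only [hparts, Finsupp.prod, Multiset.toFinsupp_support, prod_ite_zero, prod_const]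
  push_cast
  rfl

theorem divisors_inter_filter_Icc_eq_biregDivisors {l₁ l₂ m n : ℕ} (hmn : m ≤ n) :
    m.divisors ∩ {a ∈ Icc 1 n | ¬ l₁ ∣ a ∧ ¬ l₂ ∣ a} = biregDivisors l₁ l₂ m := by
  rw [inter_filter, inter_eq_left.2]
  · rfl
  · exact fun d hd =>
      mem_Icc.2 ⟨Nat.pos_of_mem_divisors hd, (Nat.divisor_le hd).trans hmn⟩

-- The coefficient of `X ^ n` in `1 + 2 * S + 2 * (S ^ 2 - Q)`, where `S` and `Q` are the sums of
-- the series `X ^ a + X ^ (2 * a) + ⋯` and of their squares over the admissible `a`.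
theorem biregOverpartitions_eq_zmod_eight (l₁ l₂ : ℕ) {n : ℕ} (hn : n ≠ 0) :
    (biregOverpartitions l₁ l₂ n : ZMod 8) =
      2 * #(biregDivisors l₁ l₂ n) +
        2 * (∑ ij ∈ antidiagonal n, #(biregDivisors l₁ l₂ ij.1) * #(biregDivisors l₁ l₂ ij.2) -
          ∑ a ∈ biregDivisors l₁ l₂ n, (((n / a : ℕ) : ZMod 8) - 1)) := by
  have hS {m : ℕ} (hm : m ≤ n) :
      coeff m (∑ a ∈ Icc 1 n with ¬ l₁ ∣ a ∧ ¬ l₂ ∣ a, multiplesSeries (ZMod 8) a) =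
        #(biregDivisors l₁ l₂ m) := by
    rw [coeff_sum_multiplesSeries, divisors_inter_filter_Icc_eq_biregDivisors hm]
  have h8 : (8 : (ZMod 8)⟦X⟧) = 0 := by
    rw [← map_ofNat C, show (8 : ZMod 8) = 0 from rfl, map_zero]
  have hC (f : (ZMod 8)⟦X⟧) : coeff n (2 * f) = 2 * coeff n f := by
    rw [← map_ofNat C, coeff_C_mul]
  rw [biregOverpartitions_eq_coeff_prod, prod_one_add_two_mul_of_eight_eq_zero h8, map_add,
    map_add, hC, hC, map_sub, coeff_one, if_neg hn, zero_add, hS le_rfl,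
    coeff_sum_multiplesSeries_sq, divisors_inter_filter_Icc_eq_biregDivisors le_rfl, sq, coeff_mul,
    sum_congr rfl fun ij hij => congrArg₂ (· * ·)
      (hS (HasAntidiagonal.antidiagonal.fst_le hij)) (hS (HasAntidiagonal.antidiagonal.snd_le hij))]
  push_cast
  rfl

theorem biregOverpartitions_two_nine_modEq {n : ℕ} (hn : n % 6 = 1) :
    biregOverpartitions 2 9 n ≡ 2 * σ 1 n [MOD 8] := by
  have hodd : Odd n := Nat.odd_iff.2 (by lia)
  have hdiv : biregDivisors 2 9 n = n.divisors :=
    biregDivisors_eq_divisors hodd.not_two_dvd_nat (by lia)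
  have hconv := four_dvd_sum_antidiagonal_of_odd hodd (fun i => #(biregDivisors 2 9 i))
    fun ij hij => even_card_biregDivisors_two_nine_mul (by rwa [mem_antidiagonal.1 hij])
  have hsigma : ∑ a ∈ n.divisors, (((n / a : ℕ) : ZMod 8) - 1) = σ 1 n - #n.divisors := by
    rw [sum_sub_distrib, ArithmeticFunction.sigma_eq_sum_div]
    simp
  have hparity : (4 * #n.divisors : ZMod 8) = 4 * σ 1 n := by
    have := even_sigma_one_iff_even_card_divisors hodd
    have hmod : 4 * #n.divisors ≡ 4 * σ 1 n [MOD 8] := by grind [Nat.ModEq]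
    exact_mod_cast (ZMod.natCast_eq_natCast_iff _ _ 8).2 hmod
  have hformula := biregOverpartitions_eq_zmod_eight 2 9 (show n ≠ 0 by lia)
  obtain ⟨c, hc⟩ := hconv
  rw [hdiv, hsigma, hc] at hformula
  rw [← ZMod.natCast_eq_natCast_iff, hformula]
  push_cast
  have h8 : (8 : ZMod 8) = 0 := rfl
  linear_combination hparity + c * h8

theorem eight_dvd_biregOverpartitions_of_odd_factorization {n q : ℕ} (hn : n % 6 = 1)
    (hq : q % 3 = 2) (hodd : Odd (n.factorization q)) : 8 ∣ biregOverpartitions 2 9 n :=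
  (biregOverpartitions_two_nine_modEq hn).dvd_iff dvd_rfl |>.2
    (mul_dvd_mul_left 2 (four_dvd_sigma_one_of_odd_factorization hn hq hodd))

theorem coprime_six_of_prime {p : ℕ} (hp : p.Prime) (h5 : 5 ≤ p) : p.Coprime 6 := by
  refine hp.coprime_iff_not_dvd.2 fun hdvd => ?_
  have hle : p ≤ 6 := Nat.le_of_dvd (by norm_num) hdvd
  interval_cases p
  · norm_num at hdvd
  · norm_num at hp

theorem mod_six_eq_five_of_coprime {m : ℕ} (hm : m.Coprime 6) (h1 : m % 6 ≠ 1) : m % 6 = 5 := by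
  have hcop : (m % 6).Coprime 6 := by rwa [Nat.Coprime, ← Nat.gcd_rec, Nat.gcd_comm]
  have hlt : m % 6 < 6 := Nat.mod_lt _ (by norm_num)
  revert hcop h1
  interval_cases m % 6 <;> decide

theorem B29_inf_family_mod8_general {P q : ℕ} (hP : P.Coprime 6) (hq : q.Prime) (h5 : 5 ≤ q)
    (h1 : q % 6 ≠ 1) (n : ℕ) {j : ℕ} (hqj : ¬ q ∣ j) :
    8 ∣ biregOverpartitions 2 9 (6 * (P ^ 2 * q ^ 2) * n + (6 * j + q) * P ^ 2 * q) := by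
  have hcop : q.Coprime 6 := coprime_six_of_prime hq h5
  have hq6 : q % 6 = 5 := mod_six_eq_five_of_coprime hcop h1
  set r := 6 * (q * n + j) + q with hr
  have hfactor : 6 * (P ^ 2 * q ^ 2) * n + (6 * j + q) * P ^ 2 * q = P ^ 2 * (q * r) := by
    rw [hr]
    ring
  have hqr : ¬ q ∣ r := by
    rw [hr, Nat.dvd_add_left dvd_rfl, hq.dvd_mul, Nat.dvd_add_right (dvd_mul_right q n)]
    exact not_or_intro (hq.coprime_iff_not_dvd.1 hcop) hqj
  have hP0 : P ≠ 0 := by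
    rintro rfl
    norm_num at hP
  have hmod : P ^ 2 * (q * r) % 6 = 1 := by
    have hP6 : P ^ 2 % 6 = 1 := Nat.ModEq.pow_totient hP
    rw [Nat.mul_mod, hP6, Nat.mul_mod q, hr, Nat.mul_add_mod, hq6]
  have hfactorization : (P ^ 2 * (q * r)).factorization q = 2 * P.factorization q + 1 := by
    have hr0 : r ≠ 0 := by lia
    simp [Nat.factorization_mul, hP0, hq.ne_zero, hr0, hq.factorization_self,
      Nat.factorization_eq_zero_of_not_dvd hqr]
  rw [hfactor]
  exact eight_dvd_biregOverpartitions_of_odd_factorization hmod (by lia) ⟨_, hfactorization⟩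

theorem B29_inf_family_mod8 (k n : ℕ) (p : Fin (k + 2) → ℕ)
    (hp : ∀ i, (p i).Prime ∧ 5 ≤ p i ∧ p i % 6 ≠ 1)
    (j : ℕ) (hj : 0 < j) (hjp : ¬ p (Fin.last (k + 1)) ∣ j) :
    8 ∣ biregOverpartitions 2 9
      (6 * (∏ i, p i ^ 2) * n +
        (6 * j + p (Fin.last (k + 1))) * (∏ i : Fin (k + 1), p i.castSucc ^ 2) *
          p (Fin.last (k + 1))) := by
  rw [Fin.prod_univ_castSucc, prod_pow]
  exact B29_inf_family_mod8_general (.prod_left fun i _ => coprime_six_of_prime (hp _).1 (hp _).2.1)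
    (hp _).1 (hp _).2.1 (hp _).2.2 n hjp
end

section
/- For all integers n ≥ 0, B̄_{2,9}(18n+15) ≡ 0 (mod 3) and B̄_{2,9}(54n+45) ≡ 0 (mod 3). -/
/-!
Write `φ` for Ramanujan's theta function. By Gauss's product formula
`φ(-q) = ∏ (1 - q ^ m) / (1 + q ^ m)`, the generating function of `B̄_{2,9}` is
`φ(-q²) φ(-q⁹) / (φ(-q) φ(-q¹⁸))`, and modulo 3 the Frobenius congruence `f(q) ^ 3 ≡ f(q³)` turns
this into `φ(-q³)² / φ(-q¹⁸)` times `φ(-q)² φ(-q²)`. The 3-dissection of `φ(-q)` and the identity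
`φ(q) φ(-q²) = φ(-q³) φ(-q⁶) + 2 q Ω(-q) Ω(-q²)` then give the terms of exponent divisible by 3.
Together with `φ(q) φ(-q) = φ(-q²)²` they collapse to
`∑ B̄_{2,9}(3 m) q ^ m ≡ φ(-q) φ(-q³) = ∑ (-1) ^ (x + y) q ^ (x² + 3 y²)`,
and `x² + 3 y²` represents no `m` of the form `3 k + 2` or `3 (3 k + 2)`.
-/

namespace BiregularOverpartition

open Filter Finset PowerSeries Topology
open scoped PowerSeries.WithPiTopology

section GaussFinite

variable {A : Type*} [CommRing A] (q : A)

/-- The `i`-th correction term, up to the factor `2 * (-1) ^ (i + 1)`, by which Gauss's product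
formula for `∑ (-1) ^ k * q ^ k ^ 2` fails after truncation to `n` factors. -/
def gaussTail (n i : ℕ) : A :=
  q ^ ((i + 1) * (n + 1)) * (∏ j ∈ Ico (i + 1) n, (1 - q ^ (j + 1))) *
    ∏ j ∈ range i, (1 + q ^ (j + 1))

/-- The telescoping certificate for the recurrence of `gaussTail` in `n`. -/
def gaussCert (n i : ℕ) : A :=
  q ^ ((i + 1) * (n + 1)) * (∏ j ∈ Ico i n, (1 - q ^ (j + 1))) * ∏ j ∈ range i, (1 + q ^ (j + 1))

lemma gaussTail_succ_sub {n i : ℕ} (h : i < n) :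
    gaussTail q (n + 1) i - (1 + q ^ (n + 1)) * gaussTail q n i =
      -(gaussCert q n i + gaussCert q n (i + 1)) := by
  rw [gaussTail, gaussTail, gaussCert, gaussCert, prod_Ico_succ_top (by lia),
    prod_eq_prod_Ico_succ_bot h, prod_range_succ _ i]
  ring

lemma sum_gaussTail_succ (n : ℕ) :
    ∑ i ∈ range (n + 1), (-1) ^ (i + 1) * gaussTail q (n + 1) i =
      (1 + q ^ (n + 1)) * ∑ i ∈ range n, (-1) ^ (i + 1) * gaussTail q n i +
        q ^ (n + 1) * ∏ j ∈ range n, (1 - q ^ (j + 1)) +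
        (-1) ^ (n + 1) * q ^ (n + 1) ^ 2 * ∏ j ∈ range (n + 1), (1 + q ^ (j + 1)) := by
  have htelescope : ∑ i ∈ range n,
      (-1) ^ (i + 1) * (gaussTail q (n + 1) i - (1 + q ^ (n + 1)) * gaussTail q n i) =
      gaussCert q n 0 - (-1) ^ n * gaussCert q n n := by
    have h := sum_range_sub' (fun i ↦ (-1) ^ i * gaussCert q n i) n
    rw [pow_zero, one_mul] at h
    rw [← h]
    refine sum_congr rfl fun i hi ↦ ?_
    rw [gaussTail_succ_sub q (mem_range.1 hi)]
    ring
  have hlast : gaussTail q (n + 1) n = q ^ (n + 1) * gaussCert q n n := by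
    simp only [gaussTail, gaussCert, Ico_self, prod_empty]
    ring
  have hzero : gaussCert q n 0 = q ^ (n + 1) * ∏ j ∈ range n, (1 - q ^ (j + 1)) := by
    simp [gaussCert]
  have hcert : gaussCert q n n = q ^ (n + 1) ^ 2 * ∏ j ∈ range n, (1 + q ^ (j + 1)) := by
    simp [gaussCert, sq]
  simp only [mul_sub, sum_sub_distrib, mul_left_comm _ (1 + q ^ (n + 1)), ← mul_sum] at htelescope
  rw [sum_range_succ, prod_range_succ]
  linear_combination htelescope + hzero + (-1) ^ (n + 1) * hlast +
    (-1) ^ (n + 1) * (1 + q ^ (n + 1)) * hcert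

lemma prod_one_sub_add_sum_gaussTail (n : ℕ) :
    ∏ j ∈ range n, (1 - q ^ (j + 1)) + 2 * ∑ i ∈ range n, (-1) ^ (i + 1) * gaussTail q n i =
      (∏ j ∈ range n, (1 + q ^ (j + 1))) *
        ∑ k ∈ Icc (-n : ℤ) n, (k.negOnePow : ℤ) * q ^ k.natAbs ^ 2 := by
  induction n with
  | zero => simp
  | succ n ih =>
    have hsum : ∑ k ∈ Icc (-(n + 1 : ℕ) : ℤ) (n + 1 : ℕ), (k.negOnePow : ℤ) * q ^ k.natAbs ^ 2 =
        ∑ k ∈ Icc (-n : ℤ) n, (k.negOnePow : ℤ) * q ^ k.natAbs ^ 2 +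
          2 * ((-1) ^ (n + 1) * q ^ (n + 1) ^ 2) := by
      have hnat : ((n : ℤ) + 1).natAbs = n + 1 := rfl
      rw [Nat.cast_add_one, sum_Icc_succ_eq_add_endpoints, Int.natAbs_neg, Int.negOnePow_neg,
        Int.coe_negOnePow, hnat]
      ring
    rw [sum_gaussTail_succ, hsum, prod_range_succ, prod_range_succ]
    linear_combination (1 + q ^ (n + 1)) * ih

end GaussFinite

section Dilate

variable {R : Type*} [CommRing R]

/-- The substitution `f(q) ↦ f(q ^ k)` on power series; `k ≠ 0` is an instance argument so that it
is found automatically for numerals. -/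
noncomputable abbrev dilate (k : ℕ) [NeZero k] : R⟦X⟧ →ₐ[R] R⟦X⟧ := expand k (NeZero.ne k)

lemma dilate_dilate (k l : ℕ) [NeZero k] [NeZero l] (f : R⟦X⟧) :
    dilate k (dilate l f) = dilate (k * l) f :=
  (expand_mul k (NeZero.ne k) l (NeZero.ne l) f).symm

lemma continuous_dilate [TopologicalSpace R] (k : ℕ) [NeZero k] :
    Continuous (dilate k : R⟦X⟧ →ₐ[R] R⟦X⟧) := by
  rw [continuous_iff_continuousAt]
  intro f
  rw [ContinuousAt, WithPiTopology.tendsto_iff_coeff_tendsto]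
  intro n
  simp only [coeff_expand]
  split_ifs
  · exact (WithPiTopology.continuous_coeff _ _).tendsto f
  · exact tendsto_const_nhds

/-- The linear map `∑ aₙ qⁿ ↦ ∑ aₖₙ qⁿ`, which extracts the coefficients along the multiples
of `k`. -/
noncomputable def contract (k : ℕ) : R⟦X⟧ →ₗ[R] R⟦X⟧ where
  toFun f := mk fun n ↦ coeff (k * n) f
  map_add' f g := by ext; simp
  map_smul' a f := by ext; simp

lemma coeff_contract (k n : ℕ) (f : R⟦X⟧) : coeff n (contract k f) = coeff (k * n) f :=
  coeff_mk n fun n ↦ coeff (k * n) f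

lemma contract_dilate_mul (k : ℕ) [NeZero k] (f g : R⟦X⟧) :
    contract k (dilate k f * g) = f * contract k g := by
  have hk := NeZero.pos k
  ext n
  rw [coeff_contract, coeff_mul, coeff_mul]
  refine (sum_of_injOn (fun p ↦ (k * p.1, k * p.2)) (fun p _ q _ h ↦ ?_) (fun p hp ↦ ?_)
    (fun p hp hmem ↦ ?_) fun p _ ↦ ?_).symm
  · simp only [Prod.mk.injEq, Nat.mul_right_inj hk.ne'] at h
    exact Prod.ext h.1 h.2
  · rw [mem_coe, HasAntidiagonal.mem_antidiagonal] at hp ⊢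
    rw [← mul_add, hp]
  · rw [HasAntidiagonal.mem_antidiagonal] at hp
    rw [coeff_expand_of_not_dvd, zero_mul]
    rintro ⟨a, ha⟩
    obtain ⟨b, hb⟩ : k ∣ p.2 := (Nat.dvd_add_right ⟨a, ha⟩).1 (hp ▸ dvd_mul_right k n)
    refine hmem ⟨(a, b), ?_, Prod.ext ha.symm hb.symm⟩
    rw [mem_coe, HasAntidiagonal.mem_antidiagonal]
    exact Nat.eq_of_mul_eq_mul_left hk (by rw [mul_add, ← ha, ← hb, hp])
  · rw [coeff_expand_mul, coeff_contract]

lemma contract_dilate (k : ℕ) [NeZero k] (f : R⟦X⟧) : contract k (dilate k f) = f := by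
  ext n
  rw [coeff_contract, coeff_expand_mul]

lemma contract_X_pow_mul_dilate {k j : ℕ} [NeZero k] (hj : 0 < j) (hjk : j < k) (f : R⟦X⟧) :
    contract k (X ^ j * dilate k f) = 0 := by
  ext n
  rw [coeff_contract, coeff_X_pow_mul', map_zero]
  split_ifs with h
  · refine coeff_expand_of_not_dvd k _ f fun hdvd ↦ Nat.not_dvd_of_pos_of_lt hj hjk ?_
    exact (Nat.dvd_sub_iff_right h (dvd_mul_right k n)).1 hdvd
  · rfl

end Dilate

section QSeries

variable {ι κ : Type*}

lemma tendsto_add_cofinite {d : ι → ℕ} {e : κ → ℕ} (hd : Tendsto d cofinite atTop)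
    (he : Tendsto e cofinite atTop) :
    Tendsto (fun p : ι × κ ↦ d p.1 + e p.2) cofinite atTop := by
  rw [← coprod_cofinite, Filter.coprod, tendsto_sup]
  exact ⟨tendsto_atTop_mono (fun _ ↦ Nat.le_add_right _ _) (hd.comp tendsto_comap),
    tendsto_atTop_mono (fun _ ↦ Nat.le_add_left _ _) (he.comp tendsto_comap)⟩

lemma tendsto_const_mul_cofinite {d : ι → ℕ} (hd : Tendsto d cofinite atTop) (k : ℕ) [NeZero k] :
    Tendsto (fun i ↦ k * d i) cofinite atTop :=
  hd.const_mul_atTop' (NeZero.pos k)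

variable (R : Type*) [CommRing R]

lemma coeff_intCast_mul_X_pow_of_ne (a : ℤ) {m n : ℕ} (h : n ≠ m) :
    coeff n ((a : R⟦X⟧) * X ^ m) = 0 := by
  rw [← map_intCast (C (R := R)), coeff_C_mul_X_pow, if_neg h]

variable [TopologicalSpace R]

/-- The formal `q`-series `∑ i, c i * q ^ d i` indexed by an arbitrary type. It is meaningful when
`d` tends to infinity along the cofinite filter, that is, when each exponent occurs finitely often;
the sum is then unconditional. -/
noncomputable def qSeries (d : ι → ℕ) (c : ι → ℤ) : R⟦X⟧ := ∑' i, (c i : R⟦X⟧) * X ^ d i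

lemma qSeries_equiv (e : κ ≃ ι) (d : ι → ℕ) (c : ι → ℤ) :
    qSeries R (d ∘ e) (c ∘ e) = qSeries R d c :=
  e.tsum_eq fun i ↦ (c i : R⟦X⟧) * X ^ d i

lemma qSeries_congr {d d' : ι → ℕ} {c c' : ι → ℤ} (hd : ∀ i, d i = d' i) (hc : ∀ i, c i = c' i) :
    qSeries R d c = qSeries R d' c' := by
  rw [funext hd, funext hc]

lemma qSeries_neg [IsTopologicalRing R] [T2Space R] (d : ι → ℕ) (c : ι → ℤ) :
    qSeries R d (fun i ↦ -c i) = -qSeries R d c := by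
  simp only [qSeries, Int.cast_neg, neg_mul, tsum_neg]

variable {d : ι → ℕ} (hd : Tendsto d cofinite atTop)
include hd

lemma summable_intCast_mul_X_pow (c : ι → ℤ) : Summable fun i ↦ (c i : R⟦X⟧) * X ^ d i := by
  rw [WithPiTopology.summable_iff_summable_coeff]
  intro n
  exact summable_of_hasFiniteSupport ((eventually_cofinite.1 (hd.eventually_gt_atTop n)).subset
    fun i hi hn ↦ hi (coeff_intCast_mul_X_pow_of_ne R _ hn.ne))

variable [T2Space R]

lemma coeff_qSeries_eq_zero (c : ι → ℤ) {n : ℕ} (h : ∀ i, d i ≠ n) :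
    coeff n (qSeries R d c) = 0 := by
  have hsum := (WithPiTopology.hasSum_iff_hasSum_coeff _).1
    (summable_intCast_mul_X_pow R hd c).hasSum n
  exact hsum.unique
    (.congr_fun hasSum_zero fun i ↦ coeff_intCast_mul_X_pow_of_ne R _ (h i).symm)

lemma dilate_qSeries (c : ι → ℤ) (k : ℕ) [NeZero k] :
    dilate k (qSeries R d c) = qSeries R (fun i ↦ k * d i) c := by
  rw [qSeries, (summable_intCast_mul_X_pow R hd c).map_tsum (dilate k) (continuous_dilate k),
    qSeries]
  refine tsum_congr fun i ↦ ?_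
  rw [map_mul, map_intCast, map_pow, expand_X, pow_mul]

variable [IsTopologicalRing R]

lemma qSeries_mul {e : κ → ℕ} (he : Tendsto e cofinite atTop) (c : ι → ℤ) (b : κ → ℤ) :
    qSeries R d c * qSeries R e b =
      qSeries R (fun p : ι × κ ↦ d p.1 + e p.2) fun p ↦ c p.1 * b p.2 := by
  have hprod (p : ι × κ) : ((c p.1 * b p.2 : ℤ) : R⟦X⟧) * X ^ (d p.1 + e p.2) =
      (c p.1 : R⟦X⟧) * X ^ d p.1 * ((b p.2 : R⟦X⟧) * X ^ e p.2) := by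
    rw [Int.cast_mul, pow_add]
    ring
  have h := summable_intCast_mul_X_pow R (tendsto_add_cofinite hd he) fun p ↦ c p.1 * b p.2
  simp only [hprod] at h
  simp only [qSeries, hprod]
  exact (summable_intCast_mul_X_pow R hd c).tsum_mul_tsum (summable_intCast_mul_X_pow R he b) h

lemma X_pow_mul_qSeries (k : ℕ) (c : ι → ℤ) :
    X ^ k * qSeries R d c = qSeries R (fun i ↦ k + d i) c := by
  rw [qSeries, ← (summable_intCast_mul_X_pow R hd c).tsum_mul_left, qSeries]
  exact tsum_congr fun i ↦ by rw [pow_add, mul_left_comm]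

lemma qSeries_eq_sum_fin {m : ℕ} (e : κ × Fin m ≃ ι) (c : ι → ℤ) :
    qSeries R d c = ∑ r, qSeries R (fun k ↦ d (e (k, r))) fun k ↦ c (e (k, r)) := by
  have hde (r : Fin m) : Tendsto (fun k ↦ d (e (k, r))) cofinite atTop :=
    hd.comp (e.injective.comp (Prod.mk_left_injective r)).tendsto_cofinite
  have hs := e.summable_iff.2 (summable_intCast_mul_X_pow R hd c)
  simp only [qSeries]
  rw [← Summable.tsum_finsetSum fun r _ ↦ summable_intCast_mul_X_pow R (hde r) _, ← e.tsum_eq]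
  exact (hs.tsum_prod' fun k ↦ .of_finite).trans (tsum_congr fun k ↦ tsum_fintype _)

end QSeries

section Theta

lemma tendsto_cofinite_of_natAbs_le {d : ℤ → ℕ} (h : ∀ x, x.natAbs ≤ d x) :
    Tendsto d cofinite atTop := by
  refine tendsto_atTop_mono h ?_
  rw [← Nat.cofinite_eq_atTop]
  refine .cofinite_of_finite_preimage_singleton fun n ↦ ?_
  exact (Set.finite_Icc (-n : ℤ) n).subset fun x (hx : x.natAbs = n) ↦ by grind

lemma tendsto_natAbs_sq : Tendsto (fun x : ℤ ↦ x.natAbs ^ 2) cofinite atTop :=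
  tendsto_cofinite_of_natAbs_le fun _ ↦ Nat.le_self_pow two_ne_zero _

lemma tendsto_natAbs_two_mul_add_one_sq :
    Tendsto (fun x : ℤ ↦ (2 * x + 1).natAbs ^ 2) cofinite atTop :=
  tendsto_cofinite_of_natAbs_le fun x ↦
    (by lia : x.natAbs ≤ (2 * x + 1).natAbs).trans (Nat.le_self_pow two_ne_zero _)

lemma tendsto_natAbs_mul_three_mul_add_two :
    Tendsto (fun x : ℤ ↦ (x * (3 * x + 2)).natAbs) cofinite atTop :=
  tendsto_cofinite_of_natAbs_le fun x ↦ by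
    rw [Int.natAbs_mul]
    exact Nat.le_mul_of_pos_right _ (by lia)

lemma abs_mul_three_mul_add_two (x : ℤ) : |x * (3 * x + 2)| = x * (3 * x + 2) := by
  refine abs_of_nonneg ?_
  rcases le_or_gt 0 x with hx | hx
  · positivity
  · exact mul_nonneg_of_nonpos_of_nonpos hx.le (by lia)

/-- The lattice `ℤ × ℤ` split into the classes of `x + y` modulo `m`: the class of `r` consists of
the points with `x + y = m * v + r` and `y = v - u`, parametrized by `(u, v)`. The choice of `u`
diagonalizes `x ^ 2 + (m - 1) * y ^ 2` on each class. -/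
def residueEquiv (m : ℕ) [NeZero m] : (ℤ × ℤ) × Fin m ≃ ℤ × ℤ where
  toFun p := ((Int.divModEquiv m).symm (p.1.2, p.2) - (p.1.2 - p.1.1), p.1.2 - p.1.1)
  invFun q := (((Int.divModEquiv m (q.1 + q.2)).1 - q.2, (Int.divModEquiv m (q.1 + q.2)).1),
    (Int.divModEquiv m (q.1 + q.2)).2)
  left_inv p := by simp only [sub_add_cancel, Equiv.apply_symm_apply, sub_sub_cancel]
  right_inv q := by
    simp only [sub_sub_cancel, Prod.mk.eta, Equiv.symm_apply_apply, add_sub_cancel_right]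

lemma residueEquiv_apply (m : ℕ) [NeZero m] (u v : ℤ) (r : Fin m) :
    residueEquiv m ((u, v), r) = (v * m + r - (v - u), v - u) := rfl

variable (R : Type*) [CommRing R] [TopologicalSpace R]

/-- Ramanujan's theta function `φ(q) = ∑ q ^ x ^ 2`, the sum over `x : ℤ`. -/
noncomputable def phi : R⟦X⟧ := qSeries R (fun x : ℤ ↦ x.natAbs ^ 2) fun _ ↦ 1

/-- `φ(-q) = ∑ (-1) ^ x * q ^ x ^ 2`, the sum over `x : ℤ`. -/
noncomputable def phiNeg : R⟦X⟧ := qSeries R (fun x : ℤ ↦ x.natAbs ^ 2) fun x ↦ x.negOnePow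

/-- The odd part `∑ q ^ (2 * x + 1) ^ 2` of `φ(q)`. -/
noncomputable def phiOdd : R⟦X⟧ := qSeries R (fun x : ℤ ↦ (2 * x + 1).natAbs ^ 2) fun _ ↦ 1

/-- `Ω(-q) = ∑ (-1) ^ x * q ^ (x * (3 * x + 2))`, the sum over `x : ℤ`, which carries the terms of
`φ(-q)` with exponent prime to 3. -/
noncomputable def omegaNeg : R⟦X⟧ :=
  qSeries R (fun x : ℤ ↦ (x * (3 * x + 2)).natAbs) fun x ↦ x.negOnePow

variable [IsTopologicalRing R] [T2Space R]

lemma phi_eq_add : phi R = dilate 4 (phi R) + phiOdd R := by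
  nth_rw 1 [phi]
  rw [qSeries_eq_sum_fin R tendsto_natAbs_sq (Int.divModEquiv 2).symm, Fin.sum_univ_two, phi,
    dilate_qSeries R tendsto_natAbs_sq, phiOdd]
  congr 1 <;> refine qSeries_congr R (fun x ↦ ?_) fun _ ↦ rfl
  · simp [Int.natAbs_mul, mul_pow, mul_comm]
  · simp [mul_comm]

lemma phiNeg_eq_sub : phiNeg R = dilate 4 (phi R) - phiOdd R := by
  rw [phiNeg, qSeries_eq_sum_fin R tendsto_natAbs_sq (Int.divModEquiv 2).symm, Fin.sum_univ_two,
    phi, dilate_qSeries R tendsto_natAbs_sq, sub_eq_add_neg, phiOdd, ← qSeries_neg]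
  congr 1 <;> refine qSeries_congr R (fun x ↦ ?_) fun x ↦ ?_
  · simp [Int.natAbs_mul, mul_pow, mul_comm]
  · simp [Int.negOnePow_even]
  · simp [mul_comm]
  · simp [Int.negOnePow_succ, Int.negOnePow_even]

lemma dilate_two_phiNeg_sq : dilate 2 (phiNeg R) ^ 2 = dilate 4 (phi R) ^ 2 - phiOdd R ^ 2 := by
  have hd (k : ℕ) [NeZero k] := tendsto_const_mul_cofinite tendsto_natAbs_sq k
  have ho := tendsto_natAbs_two_mul_add_one_sq
  rw [phiNeg, dilate_qSeries R tendsto_natAbs_sq, sq, qSeries_mul R (hd 2) (hd 2),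
    qSeries_eq_sum_fin R (tendsto_add_cofinite (hd 2) (hd 2)) (residueEquiv 2), Fin.sum_univ_two,
    phi, dilate_qSeries R tendsto_natAbs_sq, phiOdd, sq, sq, qSeries_mul R (hd 4) (hd 4),
    qSeries_mul R ho ho, sub_eq_add_neg, ← qSeries_neg]
  congr 1 <;> refine qSeries_congr R (fun ⟨u, v⟩ ↦ ?_) fun ⟨u, v⟩ ↦ ?_ <;>
    rw [residueEquiv_apply]
  · zify
    simp only [sq_abs, Fin.val_zero]
    ring
  · rw [← Units.val_mul, ← Int.negOnePow_add, sub_add_cancel]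
    simp [Int.negOnePow_even]
  · zify
    simp only [sq_abs, Fin.val_one]
    ring
  · rw [← Units.val_mul, ← Int.negOnePow_add, sub_add_cancel]
    simp [Int.negOnePow_succ, Int.negOnePow_even]

lemma phi_mul_phiNeg : phi R * phiNeg R = dilate 2 (phiNeg R) ^ 2 := by
  rw [dilate_two_phiNeg_sq, phiNeg_eq_sub]
  nth_rw 1 [phi_eq_add]
  ring

lemma phiNeg_eq_dilate : phiNeg R = dilate 9 (phiNeg R) - 2 * X * dilate 3 (omegaNeg R) := by
  have ho := tendsto_const_mul_cofinite tendsto_natAbs_mul_three_mul_add_two 3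
  have hω : -(X * dilate 3 (omegaNeg R)) =
      qSeries R (fun x : ℤ ↦ 1 + 3 * (x * (3 * x + 2)).natAbs) fun x ↦ -x.negOnePow := by
    rw [omegaNeg, dilate_qSeries R tendsto_natAbs_mul_three_mul_add_two, ← pow_one X,
      X_pow_mul_qSeries R ho, qSeries_neg]
  have hsplit : phiNeg R = dilate 9 (phiNeg R) + -(X * dilate 3 (omegaNeg R)) +
      -(X * dilate 3 (omegaNeg R)) := by
    nth_rw 1 [phiNeg]
    rw [qSeries_eq_sum_fin R tendsto_natAbs_sq (Int.divModEquiv 3).symm, Fin.sum_univ_three,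
      phiNeg, dilate_qSeries R tendsto_natAbs_sq, hω]
    simp only [Int.divModEquiv_symm_apply]
    -- The reflection `x ↦ -1 - x` exchanges the residue classes 1 and 2.
    refine congrArg₂ _ (congrArg₂ _ ?_ ?_) (.trans ?_ (qSeries_equiv R (Equiv.subLeft (-1)) _ _))
      <;> refine qSeries_congr R (fun x ↦ ?_) fun x ↦ ?_
    · simp [Int.natAbs_mul, mul_pow, mul_comm]
    · congr 1
      exact (Int.negOnePow_eq_iff _ _).2
        ⟨x, by simp only [Nat.cast_ofNat, Fin.val_zero, Nat.cast_zero]; ring⟩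
    · zify
      simp only [sq_abs, abs_mul_three_mul_add_two, Fin.val_one]
      ring
    · rw [← Units.val_neg, ← Int.negOnePow_succ]
      congr 1
      exact (Int.negOnePow_eq_iff _ _).2
        ⟨x, by simp only [Nat.cast_ofNat, Fin.val_one, Nat.cast_one]; ring⟩
    · simp only [Function.comp_apply, Equiv.subLeft_apply]
      zify
      simp only [sq_abs, abs_mul_three_mul_add_two, Fin.val_two]
      ring
    · simp only [Function.comp_apply, Equiv.subLeft_apply]
      rw [← Units.val_neg, ← Int.negOnePow_succ]
      congr 1
      exact (Int.negOnePow_eq_iff _ _).2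
        ⟨2 * x + 1, by simp only [Nat.cast_ofNat, Fin.val_two]; ring⟩
  linear_combination hsplit

lemma phi_mul_dilate_two_phiNeg : phi R * dilate 2 (phiNeg R) =
    dilate 3 (phiNeg R) * dilate 6 (phiNeg R) + 2 * X * omegaNeg R * dilate 2 (omegaNeg R) := by
  have hd (k : ℕ) [NeZero k] := tendsto_const_mul_cofinite tendsto_natAbs_sq k
  have ho := tendsto_natAbs_mul_three_mul_add_two
  have ho2 := tendsto_const_mul_cofinite ho 2
  have hω : X * (omegaNeg R * dilate 2 (omegaNeg R)) = qSeries R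
      (fun p : ℤ × ℤ ↦ 1 + ((p.1 * (3 * p.1 + 2)).natAbs + 2 * (p.2 * (3 * p.2 + 2)).natAbs))
      fun p ↦ p.1.negOnePow * p.2.negOnePow := by
    rw [omegaNeg, dilate_qSeries R ho, qSeries_mul R ho ho2, ← pow_one X,
      X_pow_mul_qSeries R (tendsto_add_cofinite ho ho2)]
  have hsplit : phi R * dilate 2 (phiNeg R) = dilate 3 (phiNeg R) * dilate 6 (phiNeg R) +
      X * (omegaNeg R * dilate 2 (omegaNeg R)) + X * (omegaNeg R * dilate 2 (omegaNeg R)) := by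
    rw [hω, phi, phiNeg, dilate_qSeries R tendsto_natAbs_sq, dilate_qSeries R tendsto_natAbs_sq,
      dilate_qSeries R tendsto_natAbs_sq, qSeries_mul R tendsto_natAbs_sq (hd 2),
      qSeries_mul R (hd 3) (hd 6),
      qSeries_eq_sum_fin R (tendsto_add_cofinite tendsto_natAbs_sq (hd 2)) (residueEquiv 3),
      Fin.sum_univ_three]
    refine congrArg₂ _ (congrArg₂ _ ?_ ?_) (.trans ?_ (qSeries_equiv R
      ((Equiv.subLeft (-1)).prodCongr (Equiv.subLeft (-1))) _ _))
      <;> refine qSeries_congr R (fun ⟨u, v⟩ ↦ ?_) fun ⟨u, v⟩ ↦ ?_ <;> rw [residueEquiv_apply]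
    · zify
      simp only [sq_abs, Fin.val_zero]
      ring
    · simp [Int.negOnePow_sub, mul_comm]
    · zify
      simp only [sq_abs, Fin.val_one, abs_mul_three_mul_add_two]
      ring
    · simp [Int.negOnePow_sub, mul_comm]
    · simp only [Function.comp_apply, Equiv.prodCongr_apply, Prod.map_apply, Equiv.subLeft_apply]
      zify
      simp only [sq_abs, Fin.val_two, abs_mul_three_mul_add_two]
      ring
    · simp [Int.negOnePow_sub, mul_comm]
  linear_combination hsplit

end Theta


section Contraction

variable (R : Type*) [CommRing R] [TopologicalSpace R] [IsTopologicalRing R] [T2Space R]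

lemma contract_three_phiNeg_sq_mul : contract 3 (phiNeg R ^ 2 * dilate 2 (phiNeg R)) =
    dilate 3 (phiNeg R) * (phi R * dilate 2 (phiNeg R) + 6 * X * omegaNeg R *
      dilate 2 (omegaNeg R)) := by
  have hφ : phiNeg R = dilate 3 (dilate 3 (phiNeg R)) - 2 * X * dilate 3 (omegaNeg R) := by
    rw [dilate_dilate, ← phiNeg_eq_dilate]
  have hφ₂ : dilate 2 (phiNeg R) = dilate 3 (dilate 6 (phiNeg R)) -
      2 * X ^ 2 * dilate 3 (dilate 2 (omegaNeg R)) := by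
    have h := congrArg (dilate 2) (phiNeg_eq_dilate R)
    simp only [map_sub, map_mul, map_ofNat, expand_X, dilate_dilate] at h
    rw [dilate_dilate, dilate_dilate]
    exact h
  have hexpand : phiNeg R ^ 2 * dilate 2 (phiNeg R) =
      dilate 3 (dilate 3 (phiNeg R) ^ 2 * dilate 6 (phiNeg R) +
        8 * X * dilate 3 (phiNeg R) * omegaNeg R * dilate 2 (omegaNeg R)) +
      X ^ 1 * dilate 3 (-4 * dilate 3 (phiNeg R) * omegaNeg R * dilate 6 (phiNeg R) -
        8 * X * omegaNeg R ^ 2 * dilate 2 (omegaNeg R)) +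
      X ^ 2 * dilate 3 (4 * omegaNeg R ^ 2 * dilate 6 (phiNeg R) -
        2 * dilate 3 (phiNeg R) ^ 2 * dilate 2 (omegaNeg R)) := by
    rw [hφ₂]
    nth_rw 1 [hφ]
    simp only [map_sub, map_add, map_mul, map_pow, map_neg, map_ofNat, expand_X]
    ring
  rw [hexpand, map_add, map_add, contract_dilate,
    contract_X_pow_mul_dilate one_pos (by norm_num),
    contract_X_pow_mul_dilate two_pos (by norm_num), phi_mul_dilate_two_phiNeg]
  ring

end Contraction

section GaussProduct

lemma hasProd_ite_dvd {R : Type*} [CommRing R] [TopologicalSpace R] {g : ℕ → R⟦X⟧} {a : R⟦X⟧}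
    (ha : HasProd (fun i ↦ g (i + 1)) a) (k : ℕ) [NeZero k] (hg : ∀ m, dilate k (g m) = g (k * m)) :
    HasProd (fun i ↦ if k ∣ i + 1 then g (i + 1) else 1) (dilate k a) := by
  have hk := NeZero.pos k
  have hsucc (i : ℕ) : k * (i + 1) - 1 + 1 = k * (i + 1) :=
    Nat.sub_add_cancel (Nat.mul_pos hk i.succ_pos)
  have hinj : Function.Injective fun i ↦ k * (i + 1) - 1 := fun i j h ↦ by
    have := congrArg (· + 1) h
    simpa only [hsucc, Nat.mul_right_inj hk.ne', add_left_inj] using this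
  refine (hinj.hasProd_iff fun i hi ↦ if_neg ?_).1 ?_
  · rintro ⟨j, hj⟩
    have hj0 : 0 < j := Nat.pos_of_ne_zero (by rintro rfl; simp at hj)
    exact hi ⟨j - 1, by simp only [Nat.sub_add_cancel hj0, ← hj, Nat.add_sub_cancel]⟩
  · refine (ha.map (dilate k) (continuous_dilate k)).congr_fun fun i ↦ ?_
    simp only [Function.comp_apply, hsucc, hg, dvd_mul_right, if_true]

variable (R : Type*) [CommRing R]

lemma X_pow_dvd_sum_gaussTail (n : ℕ) :
    X ^ (n + 1) ∣ ∑ i ∈ range n, (-1) ^ (i + 1) * gaussTail (X : R⟦X⟧) n i := by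
  refine dvd_sum fun i _ ↦ Dvd.dvd.mul_left ?_ _
  rw [gaussTail, mul_assoc]
  exact (pow_dvd_pow X (Nat.le_mul_of_pos_left _ i.succ_pos)).mul_right _

variable [TopologicalSpace R]

lemma tendsto_sum_gaussTail :
    Tendsto (fun n ↦ ∑ i ∈ range n, (-1) ^ (i + 1) * gaussTail (X : R⟦X⟧) n i) atTop (𝓝 0) := by
  rw [WithPiTopology.tendsto_iff_coeff_tendsto]
  intro m
  rw [map_zero]
  refine tendsto_const_nhds.congr' ?_
  filter_upwards [eventually_ge_atTop m] with n hn
  exact (X_pow_dvd_iff.1 (X_pow_dvd_sum_gaussTail R n) m (Nat.lt_add_one_of_le hn)).symm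

/-- The infinite product `(q; q)_∞ = ∏ (1 - q ^ m)` over `m ≥ 1`. -/
noncomputable def prodOneSub : R⟦X⟧ := ∏' i, (1 - X ^ (i + 1))

/-- The infinite product `(-q; q)_∞ = ∏ (1 + q ^ m)` over `m ≥ 1`. -/
noncomputable def prodOneAdd : R⟦X⟧ := ∏' i, (1 + X ^ (i + 1))

lemma hasProd_prodOneSub : HasProd (fun i ↦ 1 - X ^ (i + 1)) (prodOneSub R) :=
  (WithPiTopology.multipliable_one_sub_X_pow R).hasProd

lemma hasProd_prodOneAdd : HasProd (fun i ↦ 1 + X ^ (i + 1)) (prodOneAdd R) := by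
  rcases subsingleton_or_nontrivial R with _ | _
  · exact Multipliable.of_subsingleton_cod.hasProd
  refine (WithPiTopology.multipliable_one_add_of_tendsto_order_atTop_nhds_top R ?_).hasProd
  refine ENat.tendsto_nhds_top_iff_natCast_lt.2 fun n ↦ ?_
  filter_upwards [eventually_ge_atTop n] with m hm
  rw [order_X_pow]
  exact_mod_cast Nat.lt_add_one_of_le hm

variable [T2Space R]

lemma isUnit_prodOneSub : IsUnit (prodOneSub R) := by
  rw [isUnit_iff_constantCoeff, prodOneSub, (WithPiTopology.multipliable_one_sub_X_pow R).map_tprod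
    (constantCoeff (R := R)) (WithPiTopology.continuous_constantCoeff R)]
  simp

variable [IsTopologicalRing R]

lemma prodOneSub_eq_prodOneAdd_mul_phiNeg : prodOneSub R = prodOneAdd R * phiNeg R := by
  have hφ := (summable_intCast_mul_X_pow R tendsto_natAbs_sq fun x ↦ x.negOnePow).hasSum.comp
    tendsto_Icc_neg
  have hleft := (hasProd_prodOneSub R).tendsto_prod_nat.add
    ((tendsto_sum_gaussTail R).const_mul 2)
  have hright := (hasProd_prodOneAdd R).tendsto_prod_nat.mul hφ
  rw [mul_zero, add_zero] at hleft
  exact tendsto_nhds_unique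
    (hleft.congr fun n ↦ prod_one_sub_add_sum_gaussTail (X : R⟦X⟧) n) hright

lemma isUnit_prodOneAdd : IsUnit (prodOneAdd R) :=
  isUnit_of_mul_isUnit_left (prodOneSub_eq_prodOneAdd_mul_phiNeg R ▸ isUnit_prodOneSub R)

lemma isUnit_phiNeg : IsUnit (phiNeg R) :=
  isUnit_of_mul_isUnit_right (prodOneSub_eq_prodOneAdd_mul_phiNeg R ▸ isUnit_prodOneSub R)

end GaussProduct

section GeneratingFunction

variable (R : Type*) [CommRing R]

/-- The generating function `∑ B̄_{ℓ₁,ℓ₂}(n) q ^ n` of the biregular overpartition numbers. -/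
def biregSeries (ℓ₁ ℓ₂ : ℕ) : R⟦X⟧ := mk fun n ↦ (biregOverpartitions ℓ₁ ℓ₂ n : R)

/-- The weight of a part size in a biregular overpartition, as a character for
`Nat.Partition.genFun`: an admissible size that occurs may be overlined or not. -/
def biregWeight (ℓ₁ ℓ₂ i _c : ℕ) : R := if ℓ₁ ∣ i ∨ ℓ₂ ∣ i then 0 else 2

lemma biregSeries_eq_genFun (ℓ₁ ℓ₂ : ℕ) :
    biregSeries R ℓ₁ ℓ₂ = Nat.Partition.genFun (biregWeight R ℓ₁ ℓ₂) := by
  ext n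
  rw [Nat.Partition.coeff_genFun, biregSeries, coeff_mk, biregOverpartitions, Nat.cast_sum]
  refine sum_congr rfl fun p _ ↦ ?_
  simp only [Finsupp.prod, biregWeight, Multiset.toFinsupp_support, ← ite_not (_ ∨ _), not_or]
  rw [prod_ite_zero]
  simp

variable [TopologicalSpace R] [IsTopologicalRing R] [T2Space R]

lemma one_add_tsum_two_smul_mul_one_sub {m : ℕ} (hm : m ≠ 0) :
    (1 + ∑' j, (2 : R) • (X : R⟦X⟧) ^ (m * (j + 1))) * (1 - X ^ m) = 1 + X ^ m := by
  have hX : constantCoeff ((X : R⟦X⟧) ^ m) = 0 := by simp [hm]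
  have hgeom := WithPiTopology.tsum_pow_mul_one_sub_of_constantCoeff_eq_zero hX
  have hfactor : ∑' j, (2 : R) • (X : R⟦X⟧) ^ (m * (j + 1)) =
      2 * X ^ m * ∑' j : ℕ, (X ^ m) ^ j := by
    rw [← (WithPiTopology.summable_pow_of_constantCoeff_eq_zero hX).tsum_mul_left]
    refine tsum_congr fun j ↦ ?_
    rw [smul_eq_C_mul, map_ofNat]
    ring
  rw [hfactor]
  linear_combination 2 * X ^ m * hgeom

lemma hasProd_biregSeries_mul_prodOneSub (ℓ₁ ℓ₂ : ℕ) :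
    HasProd (fun i ↦ if ℓ₁ ∣ i + 1 ∨ ℓ₂ ∣ i + 1 then 1 - X ^ (i + 1) else 1 + X ^ (i + 1))
      (biregSeries R ℓ₁ ℓ₂ * prodOneSub R) := by
  rw [biregSeries_eq_genFun]
  refine ((Nat.Partition.hasProd_genFun (biregWeight R ℓ₁ ℓ₂)).mul
    (hasProd_prodOneSub R)).congr_fun fun i ↦ ?_
  by_cases h : ℓ₁ ∣ i + 1 ∨ ℓ₂ ∣ i + 1
  · simp only [biregWeight, if_pos h, zero_smul, tsum_zero, add_zero, one_mul]
  · simp only [biregWeight, if_neg h, one_add_tsum_two_smul_mul_one_sub R i.succ_ne_zero]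

variable {ℓ₁ ℓ₂ : ℕ} [NeZero ℓ₁] [NeZero ℓ₂] (hℓ : ℓ₁.Coprime ℓ₂)
include hℓ

lemma biregSeries_mul_prod_eq :
    biregSeries R ℓ₁ ℓ₂ * prodOneSub R * dilate ℓ₁ (prodOneAdd R) * dilate ℓ₂ (prodOneAdd R) *
      dilate (ℓ₁ * ℓ₂) (prodOneSub R) =
    prodOneAdd R * dilate ℓ₁ (prodOneSub R) * dilate ℓ₂ (prodOneSub R) *
      dilate (ℓ₁ * ℓ₂) (prodOneAdd R) := by
  have hadd (k : ℕ) [NeZero k] := hasProd_ite_dvd (g := fun m ↦ 1 + X ^ m)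
    (hasProd_prodOneAdd R) k fun m ↦ by simp [pow_mul]
  have hsub (k : ℕ) [NeZero k] := hasProd_ite_dvd (g := fun m ↦ 1 - X ^ m)
    (hasProd_prodOneSub R) k fun m ↦ by simp [pow_mul]
  have hleft := (((hasProd_biregSeries_mul_prodOneSub R ℓ₁ ℓ₂).mul (hadd ℓ₁)).mul (hadd ℓ₂)).mul
    (hsub (ℓ₁ * ℓ₂))
  have hright := (((hasProd_prodOneAdd R).mul (hsub ℓ₁)).mul (hsub ℓ₂)).mul (hadd (ℓ₁ * ℓ₂))
  refine hleft.unique (hright.congr_fun fun i ↦ ?_)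
  have hdvd : ℓ₁ * ℓ₂ ∣ i + 1 ↔ ℓ₁ ∣ i + 1 ∧ ℓ₂ ∣ i + 1 :=
    ⟨fun h ↦ ⟨dvd_of_mul_right_dvd h, dvd_of_mul_left_dvd h⟩,
      fun h ↦ hℓ.mul_dvd_of_dvd_of_dvd h.1 h.2⟩
  by_cases h₁ : ℓ₁ ∣ i + 1 <;> by_cases h₂ : ℓ₂ ∣ i + 1 <;>
    simp only [hdvd, h₁, h₂, or_self, or_true, or_false, and_self, and_true, and_false,
      ↓reduceIte] <;>
    ring

lemma biregSeries_mul_phiNeg_mul :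
    biregSeries R ℓ₁ ℓ₂ * phiNeg R * dilate (ℓ₁ * ℓ₂) (phiNeg R) =
      dilate ℓ₁ (phiNeg R) * dilate ℓ₂ (phiNeg R) := by
  have hunit (k : ℕ) [NeZero k] := (isUnit_prodOneAdd R).map (dilate k)
  refine ((((isUnit_prodOneAdd R).mul (hunit ℓ₁)).mul (hunit ℓ₂)).mul
    (hunit (ℓ₁ * ℓ₂))).mul_left_cancel ?_
  have h := biregSeries_mul_prod_eq R hℓ
  simp only [prodOneSub_eq_prodOneAdd_mul_phiNeg, map_mul] at h
  linear_combination h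

end GeneratingFunction

section ModThree

lemma dilate_eq_pow (p : ℕ) [Fact p.Prime] (f : (ZMod p)⟦X⟧) : dilate p f = f ^ p := by
  have h := MvPowerSeries.map_frobenius_expand (σ := Unit) (R := ZMod p) p (NeZero.ne p) (f := f)
  rwa [ZMod.frobenius_zmod, MvPowerSeries.map_id] at h

lemma biregSeries_mul_dilate_eighteen :
    biregSeries (ZMod 3) 2 9 * dilate 18 (phiNeg (ZMod 3)) =
      dilate 3 (phiNeg (ZMod 3) ^ 2) * (phiNeg (ZMod 3) ^ 2 * dilate 2 (phiNeg (ZMod 3))) := by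
  have h9 : dilate 9 (phiNeg (ZMod 3)) = phiNeg (ZMod 3) ^ 9 := by
    rw [← dilate_dilate 3 3, dilate_eq_pow, dilate_eq_pow]
    ring
  refine (isUnit_phiNeg (ZMod 3)).mul_left_cancel ?_
  rw [dilate_eq_pow]
  linear_combination biregSeries_mul_phiNeg_mul (ZMod 3) (ℓ₁ := 2) (ℓ₂ := 9) (by norm_num) +
    dilate 2 (phiNeg (ZMod 3)) * h9

lemma contract_three_biregSeries :
    contract 3 (biregSeries (ZMod 3) 2 9) = phiNeg (ZMod 3) * dilate 3 (phiNeg (ZMod 3)) := by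
  have hcontract := congrArg (contract 3) biregSeries_mul_dilate_eighteen
  have h18 : dilate 18 (phiNeg (ZMod 3)) = dilate 3 (dilate 6 (phiNeg (ZMod 3))) :=
    (dilate_dilate 3 6 _).symm
  have hcube : dilate 2 (phiNeg (ZMod 3)) ^ 3 = dilate 6 (phiNeg (ZMod 3)) := by
    rw [← dilate_eq_pow, dilate_dilate]
  have hthree : (3 : (ZMod 3)⟦X⟧) = 0 := by
    rw [← map_ofNat (C (R := ZMod 3)), ← map_zero (C (R := ZMod 3))]
    rfl
  rw [h18, mul_comm, contract_dilate_mul, contract_dilate_mul,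
    contract_three_phiNeg_sq_mul] at hcontract
  refine ((isUnit_phiNeg (ZMod 3)).map (dilate 6)).mul_left_cancel (hcontract.trans ?_)
  set φ := phiNeg (ZMod 3)
  set ω := omegaNeg (ZMod 3)
  calc φ ^ 2 * (dilate 3 φ * (phi (ZMod 3) * dilate 2 φ + 6 * X * ω * dilate 2 ω))
      = φ * dilate 3 φ * (phi (ZMod 3) * φ * dilate 2 φ) := by
        linear_combination (2 * φ ^ 2 * dilate 3 φ * X * ω * dilate 2 ω) * hthree
    _ = φ * dilate 3 φ * dilate 2 φ ^ 3 := by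
        rw [phi_mul_phiNeg]
        ring
    _ = dilate 6 φ * (φ * dilate 3 φ) := by rw [hcube, mul_comm]

lemma coeff_phiNeg_mul_dilate_three_eq_zero (R : Type*) [CommRing R] [TopologicalSpace R]
    [IsTopologicalRing R] [T2Space R] {m : ℕ} (hm : ∀ x y : ℤ, x ^ 2 + 3 * y ^ 2 ≠ m) :
    coeff m (phiNeg R * dilate 3 (phiNeg R)) = 0 := by
  have hd := tendsto_const_mul_cofinite tendsto_natAbs_sq 3
  rw [phiNeg, dilate_qSeries R tendsto_natAbs_sq, qSeries_mul R tendsto_natAbs_sq hd]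
  refine coeff_qSeries_eq_zero R (tendsto_add_cofinite tendsto_natAbs_sq hd) _ fun ⟨x, y⟩ h ↦
    hm x y ?_
  zify at h
  simpa only [sq_abs] using h

lemma sq_add_three_mul_sq_ne {m : ℤ} (hm : m % 3 = 2) (x y : ℤ) : x ^ 2 + 3 * y ^ 2 ≠ m := by
  have hx : x ^ 2 % 3 = 0 ∨ x ^ 2 % 3 = 1 := by
    rcases (by lia : x % 3 = 0 ∨ x % 3 = 1 ∨ x % 3 = 2) with h | h | h <;>
      simp [sq, Int.mul_emod, h]
  lia

lemma sq_add_three_mul_sq_ne_three_mul {m : ℤ} (hm : m % 3 = 2) (x y : ℤ) :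
    x ^ 2 + 3 * y ^ 2 ≠ 3 * m := by
  intro h
  obtain ⟨z, rfl⟩ : 3 ∣ x :=
    Int.prime_three.dvd_of_dvd_pow ((Int.dvd_add_left (dvd_mul_right 3 _)).1 ⟨m, h⟩)
  exact sq_add_three_mul_sq_ne hm y z (by linarith)

end ModThree

end BiregularOverpartition

open BiregularOverpartition in
theorem B29_mod3_18n15_and_54n45_general {m : ℕ} (hm : ∀ x y : ℤ, x ^ 2 + 3 * y ^ 2 ≠ m) :
    3 ∣ biregOverpartitions 2 9 (3 * m) := by
  have h := coeff_phiNeg_mul_dilate_three_eq_zero (ZMod 3) hm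
  rwa [← contract_three_biregSeries, coeff_contract, biregSeries, PowerSeries.coeff_mk,
    ZMod.natCast_eq_zero_iff] at h

open BiregularOverpartition in
theorem B29_mod3_18n15_and_54n45 (n : ℕ) :
    3 ∣ biregOverpartitions 2 9 (18 * n + 15) ∧ 3 ∣ biregOverpartitions 2 9 (54 * n + 45) := by
  rw [show 18 * n + 15 = 3 * (6 * n + 5) by ring, show 54 * n + 45 = 3 * (3 * (6 * n + 5)) by ring]
  exact ⟨B29_mod3_18n15_and_54n45_general (sq_add_three_mul_sq_ne (by lia)),
    B29_mod3_18n15_and_54n45_general fun x y ↦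
      mod_cast sq_add_three_mul_sq_ne_three_mul (m := 6 * n + 5) (by lia) x y⟩
end
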